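/- Let S be a finite set of points in the plane that is in convex position and in general position. Then the graph ΘΘ₆(S) is an 8-spanner: for all u, v ∈ S, d_{ΘΘ₆(S)}(u, v) ≤ 8·|uv|. -/

import Mathlib

open Real

noncomputable section

/-- Counterclockwise angle in `[0, 2π)` from the positive x-axis to the direction of `z`. -/
def argIn (z : ℂ) : ℝ := if 0 ≤ Complex.arg z then Complex.arg z else Complex.arg z + 2 * π

/-- The half-open cone `C_i(u)` with apex `u`: points `p ≠ u` whose direction from `u` has
counterclockwise angle in `[(i-1)π/3, iπ/3)`. -/
def cone (i : ℕ) (u : ℂ) : Set ℂ :=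
  {p | p ≠ u ∧ argIn (p - u) ∈ Set.Ico (((i : ℝ) - 1) * (π / 3)) ((i : ℝ) * (π / 3))}

/-- The index `i ∈ {1, …, 6}` of the cone of `u` containing `v`. -/
def coneIdx (u v : ℂ) : ℕ := (⌊argIn (v - u) / (π / 3)⌋).toNat + 1

/-- The angle of the bisector ray of the cone of `u` containing `v`. -/
def bisAngle (u v : ℂ) : ℝ := ((coneIdx u v : ℝ) - 1) * (π / 3) + π / 6

/-- The projective distance from `u` to `v`: the Euclidean distance from `u` to the
orthogonal projection of `v` onto the bisector ray of the cone of `u` containing `v`. -/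
def projDist (u v : ℂ) : ℝ :=
  ((v - u) * Complex.exp (-(Complex.I * (bisAngle u v : ℂ)))).re

/-- `S` is in general position: no two points of `S` lie on a common line parallel to one of
the six rays from the origin at angles `jπ/3`. -/
def GenPos (S : Finset ℂ) : Prop :=
  ∀ u ∈ S, ∀ v ∈ S, u ≠ v → ∀ j : ℕ, argIn (v - u) ≠ (j : ℝ) * (π / 3)

/-- `S` is in convex position: every point of `S` is an extreme point of the convex hull. -/
def ConvexPos (S : Finset ℂ) : Prop :=
  ∀ p ∈ S, p ∈ Set.extremePoints ℝ (convexHull ℝ (S : Set ℂ))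

/-- `u → v` is a directed edge of `Θ₆(S)`: `v` minimizes the projective distance from `u`
among the points of `S` in the cone of `u` containing `v`. -/
def ThetaEdge (S : Finset ℂ) (u v : ℂ) : Prop :=
  u ∈ S ∧ v ∈ S ∧ v ≠ u ∧
    ∀ w ∈ S, w ∈ cone (coneIdx u v) u → projDist u v ≤ projDist u w

/-- `u → v` is a directed edge of `ΘΘ₆(S)`: it is an edge of `Θ₆(S)` and among all incoming
`Θ₆`-edges `w → v` with `w` in the same cone of `v` as `u`, it minimizes `‖wv‖`. -/
def ThetaThetaEdge (S : Finset ℂ) (u v : ℂ) : Prop :=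
  ThetaEdge S u v ∧
    ∀ w, ThetaEdge S w v → coneIdx v w = coneIdx v u → projDist u v ≤ projDist w v

/-- Undirected adjacency in `ΘΘ₆(S)`: paths may use edges in either direction. -/
def TTAdj (S : Finset ℂ) (u v : ℂ) : Prop := ThetaThetaEdge S u v ∨ ThetaThetaEdge S v u

/-- `p` is a path between `u` and `v` with respect to the adjacency relation `A`. -/
def IsPath (A : ℂ → ℂ → Prop) (u v : ℂ) (p : List ℂ) : Prop :=
  p.Chain' A ∧ p.head? = some u ∧ p.getLast? = some v

/-- The Euclidean length of the polygonal path through the points of `p`. -/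
def pathLength (p : List ℂ) : ℝ := (List.zipWith dist p p.tail).sum

/-!
Distances are measured in the norm `N` whose unit ball is the regular hexagon with vertices on the
six cone rays. In coordinates `X, Y` along the two rays of a cone, `N u v = Z v - Z u` with
`Z = X + Y` for `v` in this cone of `u`, so `N` is proportional to the projective distance; moreover
`|uv| ≤ N u v ≤ (2/√3) |uv|`. Any two points are joined by a walk of `N`-length at most `6 N u v`
(`HexFrame.reachableWithin`), hence of Euclidean length at most `4√3 |uv|`.

Of the graph only `DiscardRule` matters: if `v` is nearest to `u` in a cone, then `uv` is an edge
unless an edge `wv`, with `w` in the same cone of `v` as `u` and nearer to `v`, has discarded it.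
Together with convex and general position this is invariant under the symmetries of the hexagon.

* Suppose that no point to the right of `uv` lies in the cone of one of the two points nearer than
  the other one. Then there is a walk whose length is controlled by how far the points on the left
  spread (`HexFrame.oneSidedBounds`), by induction on the number of points on the left: if the first
  step has been discarded, then `u` and the discarder form, by convexity, a pair of the same kind in
  a rotated frame. It follows that the ends of an edge of `Θ₆` are joined by a walk at most `4`
  times as long (`IsNearest.reachableWithin`).
* A pair `u, v` whose parallelogram with sides along the cone rays contains a point is split at that
  point. If the parallelogram is empty, let `p` be nearest to `u`, up to reflection above `v`. When
  no point below obstructs, walks from `u` to `p` and from `p` to `v` of the previous kind suffice.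
* Otherwise the points between `u` and `v` form one chain above and one chain below, each unimodal
  by convexity (`Ladder`). A step of a chain away from the line `uv` is replaced by a walk of
  proportional length or bypassed by an edge from the other chain. The same holds backwards from
  `v`, and an edge between the chains joins the part reached from `u` to the part reaching `v`.
-/

/-! ### Walks of bounded length -/

section Walks

variable {P : Type*} {G : SimpleGraph P} {N : P → P → ℝ} {u v w : P} {r s : ℝ}

/-- The length of a walk whose steps are measured by `N`. -/
def walkLength (N : P → P → ℝ) (p : G.Walk u v) : ℝ :=
  (p.darts.map fun d ↦ N d.fst d.snd).sum

/-- The points `u` and `v` are joined by a walk of `G` of `N`-length at most `r`. -/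
def ReachableWithin (G : SimpleGraph P) (N : P → P → ℝ) (u v : P) (r : ℝ) : Prop :=
  ∃ p : G.Walk u v, walkLength N p ≤ r

namespace ReachableWithin

lemma mono (h : ReachableWithin G N u v r) (hrs : r ≤ s) : ReachableWithin G N u v s :=
  h.imp fun _ hp ↦ hp.trans hrs

lemma refl (u : P) : ReachableWithin G N u u 0 :=
  ⟨.nil, by simp [walkLength]⟩

lemma of_adj (h : G.Adj u v) : ReachableWithin G N u v (N u v) :=
  ⟨h.toWalk, by simp [walkLength]⟩

lemma trans (huv : ReachableWithin G N u v r) (hvw : ReachableWithin G N v w s) :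
    ReachableWithin G N u w (r + s) := by
  obtain ⟨p, hp⟩ := huv
  obtain ⟨q, hq⟩ := hvw
  refine ⟨p.append q, ?_⟩
  simpa [walkLength] using add_le_add hp hq

lemma symm (hN : ∀ a b, N a b = N b a) (h : ReachableWithin G N u v r) :
    ReachableWithin G N v u r := by
  obtain ⟨p, hp⟩ := h
  refine ⟨p.reverse, le_of_eq_of_le ?_ hp⟩
  simp [walkLength, Function.comp_def, List.sum_reverse, hN]

end ReachableWithin

end Walks

/-! ### Hexagonal frames -/

section Frames

variable {P : Type*} {G : SimpleGraph P} {N : P → P → ℝ} {X Y : P → ℝ} {u v w s t : P}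

/-- Twice the signed area of the triangle `u v t` in the affine coordinates `X, Y`; it is positive
when `t` lies to the left of the line directed from `u` to `v`. -/
def orient (X Y : P → ℝ) (u v t : P) : ℝ :=
  (X v - X u) * (Y t - Y u) - (Y v - Y u) * (X t - X u)

/-- The points to the left of the line directed from `u` to `v`. -/
def leftOf (X Y : P → ℝ) (u v : P) : Set P := {t | 0 < orient X Y u v t}

/-- `v` is the point nearest to `u` in the cone `X, Y > 0` of `u`: in that cone the projective
distance is proportional to the increment of `X + Y`. -/
structure IsNearest (X Y : P → ℝ) (u v : P) : Prop where
  x_lt : X u < X v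
  y_lt : Y u < Y v
  add_le : ∀ t, X u < X t → Y u < Y t → X v + Y v ≤ X t + Y t

/-- `w` lies in the cone `X, Y < 0` of `v` and is nearer to `v` than `u` is, so that an edge
`w → v` may discard the edge `u → v`. -/
structure IsRival (X Y : P → ℝ) (u v w : P) : Prop where
  x_lt : X w < X v
  y_lt : Y w < Y v
  add_lt : X u + Y u < X w + Y w

/-- The only property of `ΘΘ₆` used in the argument, for the cone `X, Y > 0`: an edge of `Θ₆`
survives in `G` or is discarded in favour of an edge from a rival. -/
def DiscardRule (G : SimpleGraph P) (X Y : P → ℝ) : Prop :=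
  ∀ u v, IsNearest X Y u v → G.Adj u v ∨ ∃ w, IsRival X Y u v w ∧ G.Adj w v

/-- Coordinates along two adjacent cone rays, rotated by `60` degrees to the next cone. -/
def rotateFrame (c : (P → ℝ) × (P → ℝ)) : (P → ℝ) × (P → ℝ) :=
  (fun p ↦ c.1 p + c.2 p, fun p ↦ -c.1 p)

/-- A set of points in convex and general position seen in coordinates `X, Y` along two adjacent
cone rays, with the hexagonal distance `N` and a graph `G` that obeys the discard rule in each of
the six cones. -/
structure HexFrame (G : SimpleGraph P) (N : P → P → ℝ) (X Y : P → ℝ) : Prop where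
  injective_x : X.Injective
  injective_y : Y.Injective
  injective_add : (fun p ↦ X p + Y p).Injective
  orient_ne_zero : ∀ a b c, a ≠ b → b ≠ c → a ≠ c → orient X Y a b c ≠ 0
  not_mem_triangle : ∀ a b c d, 0 < orient X Y a b d → 0 < orient X Y b c d →
    ¬ 0 < orient X Y c a d
  dist_eq : ∀ a b, N a b = max |X b - X a| (max |Y b - Y a| |X b + Y b - (X a + Y a)|)
  discardRule : ∀ k : ℕ, DiscardRule G (rotateFrame^[k] (X, Y)).1 (rotateFrame^[k] (X, Y)).2

lemma IsNearest.swap (h : IsNearest X Y u v) : IsNearest Y X u v :=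
  ⟨h.y_lt, h.x_lt, fun t hy hx ↦ by linarith [h.add_le t hx hy]⟩

lemma IsRival.swap (h : IsRival X Y u v w) : IsRival Y X u v w :=
  ⟨h.y_lt, h.x_lt, by linarith [h.add_lt]⟩

lemma DiscardRule.swap (h : DiscardRule G X Y) : DiscardRule G Y X := fun u v huv ↦
  (h u v huv.swap).imp_right fun ⟨w, hw, hwv⟩ ↦ ⟨w, hw.swap, hwv⟩

lemma iterate_rotateFrame_swap (c : (P → ℝ) × (P → ℝ)) (k : ℕ) :
    rotateFrame^[k] c.swap = (rotateFrame^[5 * k] c).swap := by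
  have hconj : Function.Semiconj Prod.swap (rotateFrame (P := P))^[5] rotateFrame := by
    intro c
    ext p <;> simp [rotateFrame]
  rw [Function.iterate_mul]
  exact ((hconj.iterate_right k).eq c).symm

lemma orient_rotate (u v t : P) :
    orient (fun p ↦ X p + Y p) (fun p ↦ -X p) u v t = orient X Y u v t := by
  unfold orient; ring

lemma orient_swap (u v t : P) : orient Y X u v t = orient X Y v u t := by
  unfold orient; ring

lemma orient_mirror (u v t : P) :
    orient (fun p ↦ -Y p) (fun p ↦ -X p) v u t = orient X Y u v t := by
  unfold orient; ring

lemma orient_cycle (u v t : P) : orient X Y v t u = orient X Y u v t := by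
  unfold orient; ring

lemma orient_flip (u v t : P) : orient X Y v u t = -orient X Y u v t := by
  unfold orient; ring

@[simp] lemma orient_self_left (u t : P) : orient X Y u u t = 0 := by
  simp [orient]

@[simp] lemma orient_self_outer (u v : P) : orient X Y u v u = 0 := by
  simp [orient]

@[simp] lemma orient_self_right (u v : P) : orient X Y u v v = 0 := by
  unfold orient; ring

lemma mem_leftOf : t ∈ leftOf X Y u v ↔ 0 < orient X Y u v t := Iff.rfl

lemma leftOf_rotate (u v : P) :
    leftOf (fun p ↦ X p + Y p) (fun p ↦ -X p) u v = leftOf X Y u v := by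
  simp only [leftOf, orient_rotate]

lemma leftOf_rotate_inv (u v : P) :
    leftOf (fun p ↦ -Y p) (fun p ↦ X p + Y p) u v = leftOf X Y u v := by
  rw [← leftOf_rotate]
  simp

lemma leftOf_mirror (u v : P) :
    leftOf (fun p ↦ -Y p) (fun p ↦ -X p) v u = leftOf X Y u v := by
  simp only [leftOf, orient_mirror]

namespace HexFrame

lemma rotate (F : HexFrame G N X Y) : HexFrame G N (fun p ↦ X p + Y p) (fun p ↦ -X p) where
  injective_x := F.injective_add
  injective_y := neg_injective.comp F.injective_x
  injective_add := by simpa using F.injective_y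
  orient_ne_zero := by simpa only [orient_rotate] using F.orient_ne_zero
  not_mem_triangle := by simpa only [orient_rotate] using F.not_mem_triangle
  dist_eq a b := by
    have hx : |-X b - -X a| = |X b - X a| := by rw [← abs_neg]; ring_nf
    have hy : |X b + Y b + -X b - (X a + Y a + -X a)| = |Y b - Y a| := by ring_nf
    rw [F.dist_eq, hx, hy, max_comm |Y b - Y a|, max_left_comm]
  discardRule k := F.discardRule (k + 1)

lemma swap (F : HexFrame G N X Y) : HexFrame G N Y X where
  injective_x := F.injective_y
  injective_y := F.injective_x
  injective_add := by simpa only [add_comm] using F.injective_add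
  orient_ne_zero a b c hab hbc hac := by
    simpa only [orient_swap] using F.orient_ne_zero b a c hab.symm hac hbc
  not_mem_triangle a b c d hab hbc hca := by
    simp only [orient_swap] at hab hbc hca
    exact F.not_mem_triangle b a c d hab hca hbc
  dist_eq a b := by
    rw [F.dist_eq, max_left_comm, add_comm (X b), add_comm (X a)]
  discardRule k := by
    rw [show ((Y, X) : (P → ℝ) × (P → ℝ)) = (X, Y).swap from rfl, iterate_rotateFrame_swap]
    exact (F.discardRule (5 * k)).swap

lemma rotate_half (F : HexFrame G N X Y) : HexFrame G N (fun p ↦ -X p) (fun p ↦ -Y p) := by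
  simpa using F.rotate.rotate.rotate

lemma rotate_inv (F : HexFrame G N X Y) : HexFrame G N (fun p ↦ -Y p) (fun p ↦ X p + Y p) := by
  simpa using F.rotate.rotate.rotate_half

lemma mirror (F : HexFrame G N X Y) : HexFrame G N (fun p ↦ -Y p) (fun p ↦ -X p) :=
  F.rotate_half.swap

lemma reflect (F : HexFrame G N X Y) : HexFrame G N (fun p ↦ X p + Y p) (fun p ↦ -Y p) :=
  F.rotate_inv.swap

lemma dist_comm (F : HexFrame G N X Y) (a b : P) : N a b = N b a := by
  rw [F.dist_eq, F.dist_eq, abs_sub_comm (X b), abs_sub_comm (Y b), abs_sub_comm (X b + Y b)]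

lemma reachableWithin_symm (F : HexFrame G N X Y) {r : ℝ} (h : ReachableWithin G N u v r) :
    ReachableWithin G N v u r :=
  h.symm F.dist_comm

lemma dist_eq_of_lt (F : HexFrame G N X Y) (hx : X u < X v) (hy : Y u < Y v) :
    N u v = X v + Y v - (X u + Y u) := by
  rw [F.dist_eq, abs_of_pos (by linarith), abs_of_pos (by linarith), abs_of_pos (by linarith),
    max_eq_right (a := Y v - Y u) (by linarith), max_eq_right (by linarith)]

lemma dist_le_of_lt (F : HexFrame G N X Y) (hx : X u < X v) (hz : X u + Y u < X v + Y v) :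
    N u v ≤ (X v - X u) + (X v + Y v - (X u + Y u)) := by
  rw [F.dist_eq, abs_of_pos (sub_pos.2 hx), abs_of_pos (sub_pos.2 hz)]
  exact max_le (by linarith) (max_le (abs_le.2 ⟨by linarith, by linarith⟩) (by linarith))

lemma reachableWithin_of_adj (F : HexFrame G N X Y) (h : G.Adj u v) (hx : X u < X v)
    (hy : Y u < Y v) : ReachableWithin G N u v (X v + Y v - (X u + Y u)) :=
  F.dist_eq_of_lt hx hy ▸ .of_adj h

lemma adj_or_exists_rival (F : HexFrame G N X Y) (huv : IsNearest X Y u v) :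
    G.Adj u v ∨ (∃ w, IsRival X Y u v w ∧ X w < X u ∧ G.Adj w v) ∨
      ∃ w, IsRival X Y u v w ∧ Y w < Y u ∧ G.Adj w v := by
  have hrule : DiscardRule G X Y := F.discardRule 0
  refine (hrule u v huv).imp_right ?_
  rintro ⟨w, hw, hadj⟩
  have hwu : w ≠ u := fun h ↦ by simpa [h] using hw.add_lt
  rcases (F.injective_x.ne hwu).lt_or_gt with hx | hx
  · exact .inl ⟨w, hw, hx, hadj⟩
  rcases (F.injective_y.ne hwu).lt_or_gt with hy | hy
  · exact .inr ⟨w, hw, hy, hadj⟩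
  have hvw : X v + Y v ≤ X w + Y w := huv.add_le w hx hy
  linarith [hw.x_lt, hw.y_lt]

end HexFrame

lemma exists_isNearest [Finite P] (hx : X u < X v) (hy : Y u < Y v) :
    ∃ p, IsNearest X Y u p := by
  obtain ⟨p, ⟨hpx, hpy⟩, hmin⟩ := Set.exists_min_image {t | X u < X t ∧ Y u < Y t}
    (fun t ↦ X t + Y t) (Set.toFinite _) ⟨v, hx, hy⟩
  exact ⟨p, hpx, hpy, fun t htx hty ↦ hmin t ⟨htx, hty⟩⟩

end Frames

/-! ### Convex position -/

section Convexity

variable {P : Type*} {G : SimpleGraph P} {N : P → P → ℝ} {X Y : P → ℝ} {u v s t p : P}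

lemma orient_pos_of_le_left (hx : X u < X v) (hy : Y u < Y v) (htx : X t ≤ X u)
    (hty : Y u < Y t) : 0 < orient X Y u v t := by
  unfold orient
  linarith [mul_pos (sub_pos.2 hx) (sub_pos.2 hty),
    mul_nonneg (sub_pos.2 hy).le (sub_nonneg.2 htx)]

lemma orient_pos_of_above (hx : X u < X v) (hy : Y u < Y v) (htx : X t ≤ X v)
    (hty : Y v < Y t) : 0 < orient X Y u v t := by
  unfold orient
  linarith [mul_pos (sub_pos.2 hx) (sub_pos.2 hty),
    mul_nonneg (sub_pos.2 hy).le (sub_nonneg.2 htx)]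

lemma orient_neg_of_below (hx : X u < X v) (hy : Y u < Y v) (htx : X u ≤ X t)
    (hty : Y t < Y u) : orient X Y u v t < 0 := by
  unfold orient
  linarith [mul_pos (sub_pos.2 hx) (sub_pos.2 hty),
    mul_nonneg (sub_pos.2 hy).le (sub_nonneg.2 htx)]

lemma orient_neg_of_le_right (hx : X u < X v) (hy : Y u < Y v) (htx : X v ≤ X t)
    (hty : Y t < Y v) : orient X Y u v t < 0 := by
  unfold orient
  linarith [mul_pos (sub_pos.2 hx) (sub_pos.2 hty),
    mul_nonneg (sub_pos.2 hy).le (sub_nonneg.2 htx)]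

namespace HexFrame

lemma eq_or_orient_neg_or_pos (F : HexFrame G N X Y) (huv : u ≠ v) (t : P) :
    t = u ∨ t = v ∨ orient X Y u v t < 0 ∨ 0 < orient X Y u v t := by
  by_contra! h
  exact F.orient_ne_zero u v t huv h.2.1.symm h.1.symm (le_antisymm h.2.2.2 h.2.2.1)

lemma leftOf_subset_leftOf_start (F : HexFrame G N X Y) (hs : s ∈ leftOf X Y u v) :
    leftOf X Y u s ⊆ leftOf X Y u v := by
  intro t ht
  rw [mem_leftOf] at hs ht ⊢
  have huv : u ≠ v := by rintro rfl; simp at hs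
  rcases F.eq_or_orient_neg_or_pos huv t with rfl | rfl | htv | htv
  · simp at ht
  · rw [← orient_cycle, ← orient_cycle, orient_flip] at ht
    linarith
  · refine (F.not_mem_triangle s t v u ?_ ?_ ?_).elim
    · rwa [orient_cycle]
    · rw [orient_flip, orient_cycle]
      linarith
    · rwa [orient_cycle]
  · exact htv

lemma leftOf_subset_leftOf_finish (F : HexFrame G N X Y) (hs : s ∈ leftOf X Y u v) :
    leftOf X Y s v ⊆ leftOf X Y u v := by
  simpa only [leftOf_mirror] using F.mirror.leftOf_subset_leftOf_start
    (leftOf_mirror (X := X) (Y := Y) u v ▸ hs)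

lemma orient_neg_of_mem_leftOf (F : HexFrame G N X Y) (hs : s ∈ leftOf X Y u v)
    (ht : t ∈ leftOf X Y u s) : orient X Y s v t < 0 := by
  rw [mem_leftOf] at hs ht
  have hsv : s ≠ v := by rintro rfl; simp at hs
  rcases F.eq_or_orient_neg_or_pos hsv t with rfl | rfl | htv | htv
  · simp at ht
  · rw [← orient_cycle, ← orient_cycle, orient_flip] at ht
    linarith
  · exact htv
  · refine (F.not_mem_triangle u v t s hs ?_ ?_).elim
    · rwa [orient_cycle]
    · rwa [orient_cycle, orient_cycle]

lemma ncard_leftOf_start_lt [Finite P] (F : HexFrame G N X Y) (hs : s ∈ leftOf X Y u v) :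
    (leftOf X Y u s).ncard < (leftOf X Y u v).ncard :=
  Set.ncard_lt_ncard ⟨F.leftOf_subset_leftOf_start hs, fun h ↦ by simpa [mem_leftOf] using h hs⟩

lemma ncard_leftOf_finish_lt [Finite P] (F : HexFrame G N X Y) (hs : s ∈ leftOf X Y u v) :
    (leftOf X Y s v).ncard < (leftOf X Y u v).ncard :=
  Set.ncard_lt_ncard ⟨F.leftOf_subset_leftOf_finish hs, fun h ↦ by simpa [mem_leftOf] using h hs⟩

/-- A point `t` violating the bound would lie inside the triangle `u v r`. -/
lemma le_of_mem_angle (F : HexFrame G N X Y) {r : P} (hr : 0 < orient X Y u v r)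
    (htv : 0 < orient X Y u v t) (htr : orient X Y u r t < 0) {a b m : ℝ}
    (hmu : a * X u + b * Y u < m) (hmr : m ≤ a * X r + b * Y r) (hmv : m ≤ a * X v + b * Y v) :
    m ≤ a * X t + b * Y t := by
  by_contra! hmt
  have barycentric : orient X Y u v t * (a * X r + b * Y r - (a * X u + b * Y u)) +
      -orient X Y u r t * (a * X v + b * Y v - (a * X u + b * Y u)) =
      orient X Y u v r * (a * X t + b * Y t - (a * X u + b * Y u)) := by unfold orient; ring
  have hr' := mul_le_mul_of_nonneg_left (sub_le_sub_right hmr (a * X u + b * Y u)) htv.le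
  have hv' := mul_le_mul_of_nonneg_left (sub_le_sub_right hmv (a * X u + b * Y u))
    (neg_pos.2 htr).le
  have ht' := mul_lt_mul_of_pos_left (sub_lt_sub_right hmt (a * X u + b * Y u)) hr
  have key : orient X Y v r t = orient X Y u v r - orient X Y u v t + orient X Y u r t := by
    unfold orient; ring
  have hvr : 0 < orient X Y v r t * (m - (a * X u + b * Y u)) := by rw [key]; linarith
  refine F.not_mem_triangle u v r t htv (pos_of_mul_pos_left hvr (by linarith)) ?_
  rw [orient_flip]
  linarith

lemma lt_middle_of_mem_leftOf_start (F : HexFrame G N X Y) (hs : s ∈ leftOf X Y u v)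
    (ht : t ∈ leftOf X Y u s) {a b : ℝ} (hus : a * X u + b * Y u ≤ a * X s + b * Y s)
    (hsv : a * X s + b * Y s < a * X v + b * Y v) :
    a * X t + b * Y t < a * X s + b * Y s := by
  have barycentric : orient X Y u v s * (a * X s + b * Y s - (a * X t + b * Y t)) =
      orient X Y u s t * (a * X v + b * Y v - (a * X s + b * Y s)) +
      -orient X Y s v t * (a * X s + b * Y s - (a * X u + b * Y u)) := by unfold orient; ring
  have hpos := mul_pos ht (sub_pos.2 hsv)
  have hnonneg := mul_nonneg (neg_pos.2 (F.orient_neg_of_mem_leftOf hs ht)).le (sub_nonneg.2 hus)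
  exact sub_pos.1 (pos_of_mul_pos_right (by linarith) (le_of_lt hs))

lemma lt_start_of_mem_leftOf_start (F : HexFrame G N X Y) (hs : s ∈ leftOf X Y u v)
    (ht : t ∈ leftOf X Y u s) {a b : ℝ} (hsu : a * X s + b * Y s ≤ a * X u + b * Y u)
    (huv : a * X u + b * Y u < a * X v + b * Y v) :
    a * X t + b * Y t < a * X u + b * Y u := by
  have barycentric : orient X Y u v s * (a * X u + b * Y u - (a * X t + b * Y t)) =
      orient X Y u s t * (a * X v + b * Y v - (a * X u + b * Y u)) +
      orient X Y u v t * (a * X u + b * Y u - (a * X s + b * Y s)) := by unfold orient; ring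
  have hpos := mul_pos ht (sub_pos.2 huv)
  have hnonneg := mul_nonneg (le_of_lt (F.leftOf_subset_leftOf_start hs ht)) (sub_nonneg.2 hsu)
  exact sub_pos.1 (pos_of_mul_pos_right (by linarith) (le_of_lt hs))

lemma middle_lt_of_mem_leftOf_finish (F : HexFrame G N X Y) (hs : s ∈ leftOf X Y u v)
    (ht : t ∈ leftOf X Y s v) {a b : ℝ} (hus : a * X u + b * Y u < a * X s + b * Y s)
    (hsv : a * X s + b * Y s ≤ a * X v + b * Y v) :
    a * X s + b * Y s < a * X t + b * Y t := by
  rw [← leftOf_mirror] at hs ht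
  linarith [F.mirror.lt_middle_of_mem_leftOf_start hs ht (a := b) (b := a) (by linarith)
    (by linarith)]

lemma finish_lt_of_mem_leftOf_finish (F : HexFrame G N X Y) (hs : s ∈ leftOf X Y u v)
    (ht : t ∈ leftOf X Y s v) {a b : ℝ} (huv : a * X u + b * Y u < a * X v + b * Y v)
    (hvs : a * X v + b * Y v ≤ a * X s + b * Y s) :
    a * X v + b * Y v < a * X t + b * Y t := by
  rw [← leftOf_mirror] at hs ht
  linarith [F.mirror.lt_start_of_mem_leftOf_start hs ht (a := b) (b := a) (by linarith)
    (by linarith)]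

end HexFrame

/-- The points in the interior of the parallelogram with opposite corners `u, v` and sides along
the cone rays `X` and `Y`. -/
def box (X Y : P → ℝ) (u v : P) : Set P :=
  {t | X u < X t ∧ Y u < Y t ∧ X t < X v ∧ Y t < Y v}

/-- For `v` in the cone `X, Y > 0` of `u`: no point to the right of the line `u v` lies in the cone
of `u` nearer than `v`, or in the opposite cone of `v` nearer than `u`. -/
structure RightClear (X Y : P → ℝ) (u v : P) : Prop where
  start : ∀ t, orient X Y u v t < 0 → X u < X t → Y u < Y t → X v + Y v ≤ X t + Y t
  finish : ∀ t, orient X Y u v t < 0 → X t < X v → Y t < Y v → X t + Y t ≤ X u + Y u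

namespace RightClear

lemma mirror (h : RightClear X Y u v) : RightClear (fun p ↦ -Y p) (fun p ↦ -X p) v u where
  start t ht hx hy := by
    rw [orient_mirror] at ht
    linarith [h.finish t ht (by linarith) (by linarith)]
  finish t ht hx hy := by
    rw [orient_mirror] at ht
    linarith [h.start t ht (by linarith) (by linarith)]

lemma mem_leftOf (F : HexFrame G N X Y) (h : RightClear X Y u v) (hx : X u < X t)
    (hy : Y u < Y t) (hz : X t + Y t < X v + Y v) : t ∈ leftOf X Y u v := by
  have huv : u ≠ v := by rintro rfl; linarith
  rcases F.eq_or_orient_neg_or_pos huv t with rfl | rfl | ht | ht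
  · exact absurd hx (lt_irrefl _)
  · exact absurd hz (lt_irrefl _)
  · exact absurd hz (h.start t ht hx hy).not_gt
  · exact ht

lemma mem_leftOf_of_mem_box (F : HexFrame G N X Y) (h : RightClear X Y u v)
    (ht : t ∈ box X Y u v) : t ∈ leftOf X Y u v := by
  obtain ⟨hux, huy, hxv, hyv⟩ := ht
  exact h.mem_leftOf F hux huy (by linarith)

lemma start_of_mem_box (F : HexFrame G N X Y) (h : RightClear X Y u v) (hs : s ∈ box X Y u v) :
    RightClear X Y u s := by
  have hleft := h.mem_leftOf_of_mem_box F hs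
  obtain ⟨hux, huy, hxv, hyv⟩ := hs
  have huv : u ≠ v := by rintro rfl; linarith
  constructor
  · intro t hts htx hty
    rcases F.eq_or_orient_neg_or_pos huv t with rfl | rfl | ht | ht
    · exact absurd htx (lt_irrefl _)
    · linarith
    · linarith [h.start t ht htx hty]
    · linarith [F.le_of_mem_angle hleft ht hts (a := 1) (b := 1) (m := X s + Y s) (by linarith)
        (by linarith) (by linarith)]
  · intro t hts htx hty
    rcases F.eq_or_orient_neg_or_pos huv t with rfl | rfl | ht | ht
    · exact le_rfl
    · linarith
    · exact h.finish t ht (by linarith) (by linarith)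
    · linarith [F.le_of_mem_angle hleft ht hts (a := 1) (b := 0) (m := X s) (by linarith)
        (by linarith) (by linarith)]

lemma finish_of_mem_box (F : HexFrame G N X Y) (h : RightClear X Y u v) (hs : s ∈ box X Y u v) :
    RightClear X Y s v := by
  obtain ⟨hux, huy, hxv, hyv⟩ := hs
  simpa only [neg_neg] using (h.mirror.start_of_mem_box F.mirror
    ⟨neg_lt_neg hyv, neg_lt_neg hxv, neg_lt_neg huy, neg_lt_neg hux⟩).mirror

lemma le_of_isRival (h : RightClear X Y u v) (hx : X u < X v) (hy : Y u < Y v)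
    (ht : IsRival X Y u p t) (hp : X p ≤ X v) : Y u ≤ Y t := by
  by_contra! htu
  have hright := orient_neg_of_below hx hy (by linarith [ht.add_lt]) htu
  linarith [h.finish t hright (ht.x_lt.trans_le hp) (htu.trans hy), ht.add_lt]

end RightClear

end Convexity

/-! ### One-sided pairs -/

section OneSided

variable {P : Type*} {G : SimpleGraph P} {N : P → P → ℝ} {X Y : P → ℝ} {u v w s p : P}

/-- Walk lengths guaranteed for a pair with clear right side. The first letter of a field names the
functional among `X`, `Z = X + Y`, `Y` that bounds the points on the left from below at `u`, the
second letter the one that bounds them from above at `v`. -/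
structure ForwardBounds (G : SimpleGraph P) (N : P → P → ℝ) (X Y : P → ℝ) (u v : P) : Prop where
  xy : (∀ t ∈ leftOf X Y u v, X u < X t) → (∀ t ∈ leftOf X Y u v, Y t < Y v) →
    ReachableWithin G N u v ((X v - X u) + (Y v - Y u))
  zy : (∀ t ∈ leftOf X Y u v, X u + Y u < X t + Y t) → (∀ t ∈ leftOf X Y u v, Y t < Y v) →
    ReachableWithin G N u v ((X v - X u) + 2 * (Y v - Y u))
  zz : (∀ t ∈ leftOf X Y u v, X u + Y u < X t + Y t) →
    (∀ t ∈ leftOf X Y u v, X t + Y t < X v + Y v) →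
    ReachableWithin G N u v (3 * (X v - X u) + 2 * (Y v - Y u))
  yy : (∀ t ∈ leftOf X Y u v, Y u < Y t) → (∀ t ∈ leftOf X Y u v, Y t < Y v) →
    ReachableWithin G N u v ((X v - X u) + 3 * (Y v - Y u))
  yz : (∀ t ∈ leftOf X Y u v, Y u < Y t) → (∀ t ∈ leftOf X Y u v, X t + Y t < X v + Y v) →
    ReachableWithin G N u v (4 * (X v - X u) + 3 * (Y v - Y u))

/-- `ForwardBounds` together with the bounds obtained by exchanging the roles of `u` and `v`. -/
structure OneSidedBounds (G : SimpleGraph P) (N : P → P → ℝ) (X Y : P → ℝ) (u v : P) : Prop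
    extends ForwardBounds G N X Y u v where
  xz : (∀ t ∈ leftOf X Y u v, X u < X t) → (∀ t ∈ leftOf X Y u v, X t + Y t < X v + Y v) →
    ReachableWithin G N u v (2 * (X v - X u) + (Y v - Y u))
  zx : (∀ t ∈ leftOf X Y u v, X u + Y u < X t + Y t) → (∀ t ∈ leftOf X Y u v, X t < X v) →
    ReachableWithin G N u v (3 * (X v - X u) + 4 * (Y v - Y u))

/-- The induction hypothesis: the bounds hold, in all frames, for the pairs with clear right side
and fewer than `n` points on the left. -/
def OneSidedBoundsBelow (G : SimpleGraph P) (N : P → P → ℝ) (n : ℕ) : Prop :=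
  ∀ ⦃X Y : P → ℝ⦄ ⦃u v : P⦄, HexFrame G N X Y → X u < X v → Y u < Y v → RightClear X Y u v →
    (leftOf X Y u v).ncard < n → OneSidedBounds G N X Y u v

lemma OneSidedBoundsBelow.mono {m n : ℕ} (H : OneSidedBoundsBelow G N n) (hmn : m ≤ n) :
    OneSidedBoundsBelow G N m :=
  fun _ _ _ _ F hx hy hclear hcard ↦ H F hx hy hclear (hcard.trans_le hmn)

lemma ForwardBounds.oneSidedBounds (F : HexFrame G N X Y) (hforward : ForwardBounds G N X Y u v)
    (hbackward : ForwardBounds G N (fun p ↦ -Y p) (fun p ↦ -X p) v u) :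
    OneSidedBounds G N X Y u v where
  toForwardBounds := hforward
  xz hstart hfinish := by
    refine (F.reachableWithin_symm (hbackward.zy ?_ ?_)).mono (by linarith)
    all_goals rw [leftOf_mirror]
    · exact fun t ht ↦ by linarith [hfinish t ht]
    · exact fun t ht ↦ by linarith [hstart t ht]
  zx hstart hfinish := by
    refine (F.reachableWithin_symm (hbackward.yz ?_ ?_)).mono (by linarith)
    all_goals rw [leftOf_mirror]
    · exact fun t ht ↦ by linarith [hfinish t ht]
    · exact fun t ht ↦ by linarith [hstart t ht]

namespace IsNearest

lemma mem_leftOf_of_isRival (huv : IsNearest X Y u v) (hw : IsRival X Y u v w)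
    (hwu : X w < X u) : w ∈ leftOf X Y u v :=
  orient_pos_of_le_left huv.x_lt huv.y_lt hwu.le (by linarith [hw.add_lt])

lemma rightClear_of_isRival (F : HexFrame G N X Y) (huv : IsNearest X Y u v)
    (hw : IsRival X Y u v w) (hwu : X w < X u) :
    RightClear (fun p ↦ X p + Y p) (fun p ↦ -X p) u w := by
  have hadd := hw.add_lt
  have left_of_line : ∀ t, orient X Y u w t < 0 → X t ≤ X u → Y u < Y t → Y w ≤ Y t := by
    intro t ht htx hty
    linarith [F.le_of_mem_angle (huv.mem_leftOf_of_isRival hw hwu)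
      (orient_pos_of_le_left huv.x_lt huv.y_lt htx hty) ht (a := 0) (b := 1) (m := Y w)
      (by linarith) (by linarith) (by linarith [hw.y_lt])]
  constructor
  · intro t ht hz hx
    rw [orient_rotate] at ht
    linarith [left_of_line t ht (by linarith) (by linarith)]
  · intro t ht hz hx
    rw [orient_rotate] at ht
    by_contra! hyt
    rcases le_or_gt (X t) (X u) with htu | htu
    · linarith [left_of_line t ht htu (by linarith)]
    · linarith [huv.add_le t htu (by linarith), hw.x_lt, hw.y_lt]

lemma oneSidedBounds_of_isRival [Finite P] (F : HexFrame G N X Y) (huv : IsNearest X Y u v)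
    (H : OneSidedBoundsBelow G N (leftOf X Y u v).ncard) (hw : IsRival X Y u v w)
    (hwu : X w < X u) : OneSidedBounds G N (fun p ↦ X p + Y p) (fun p ↦ -X p) u w := by
  refine H F.rotate hw.add_lt (by linarith) (huv.rightClear_of_isRival F hw hwu) ?_
  rw [leftOf_rotate]
  exact F.ncard_leftOf_start_lt (huv.mem_leftOf_of_isRival hw hwu)

lemma lt_of_mem_leftOf_rival (F : HexFrame G N X Y) (huv : IsNearest X Y u v)
    (hw : IsRival X Y u v w) (hwu : X w < X u) {t : P} (ht : t ∈ leftOf X Y u w) :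
    X t < X u ∧ Y t < Y w := by
  have hmem := huv.mem_leftOf_of_isRival hw hwu
  constructor
  · linarith [F.lt_start_of_mem_leftOf_start hmem ht (a := 1) (b := 0) (by linarith)
      (by linarith [huv.x_lt])]
  · linarith [F.lt_middle_of_mem_leftOf_start hmem ht (a := 0) (b := 1)
      (by linarith [hw.add_lt]) (by linarith [hw.y_lt])]

section Detour

variable (F : HexFrame G N X Y) (huv : IsNearest X Y u v) (hw : IsRival X Y u v w)
  (hwu : X w < X u) (hadj : G.Adj w v)
  (O : OneSidedBounds G N (fun p ↦ X p + Y p) (fun p ↦ -X p) u w)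

include F huv hw hwu hadj O

lemma detour_of_add_lt (hstart : ∀ t ∈ leftOf X Y u w, X u + Y u < X t + Y t) :
    ReachableWithin G N u v (X v + Y v - (X u + Y u) + (Y v - Y u)) := by
  refine ((O.xz ?_ ?_).trans (F.reachableWithin_of_adj hadj hw.x_lt hw.y_lt)).mono
    (by linarith [hw.y_lt])
  all_goals rw [leftOf_rotate]
  · exact hstart
  · exact fun t ht ↦ by linarith [(huv.lt_of_mem_leftOf_rival F hw hwu ht).2]

lemma detour_of_y_lt (hstart : ∀ t ∈ leftOf X Y u w, Y u < Y t) :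
    ReachableWithin G N u v (X v + Y v - (X u + Y u) + 2 * (Y v - Y u)) := by
  refine ((O.zz ?_ ?_).trans (F.reachableWithin_of_adj hadj hw.x_lt hw.y_lt)).mono
    (by linarith [hw.y_lt])
  all_goals rw [leftOf_rotate]
  · exact fun t ht ↦ by linarith [hstart t ht]
  · exact fun t ht ↦ by linarith [(huv.lt_of_mem_leftOf_rival F hw hwu ht).2]

lemma detour : ReachableWithin G N u v (X v + Y v - (X u + Y u) + 3 * (Y v - Y u)) := by
  refine ((O.yz ?_ ?_).trans (F.reachableWithin_of_adj hadj hw.x_lt hw.y_lt)).mono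
    (by linarith [hw.y_lt])
  all_goals
    rw [leftOf_rotate]
    intro t ht
    linarith [huv.lt_of_mem_leftOf_rival F hw hwu ht]

end Detour

lemma reachableWithin_of_detour (F : HexFrame G N X Y) (huv : IsNearest X Y u v)
    (hright : ∀ t, IsRival X Y u v t → Y u ≤ Y t) {r : ℝ} (hr : X v + Y v - (X u + Y u) ≤ r)
    (hleft : ∀ w, IsRival X Y u v w → X w < X u → G.Adj w v → ReachableWithin G N u v r) :
    ReachableWithin G N u v r := by
  rcases F.adj_or_exists_rival huv with hadj | ⟨w, hw, hwu, hadj⟩ | ⟨w, hw, hwu, -⟩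
  · exact (F.reachableWithin_of_adj hadj huv.x_lt huv.y_lt).mono hr
  · exact hleft w hw hwu hadj
  · exact absurd hwu (hright w hw).not_gt

section FirstStep

variable (F : HexFrame G N X Y) (huv : IsNearest X Y u v)
  (hright : ∀ t, IsRival X Y u v t → Y u ≤ Y t)

include F huv hright

lemma reachableWithin_of_x_lt (hstart : ∀ t ∈ leftOf X Y u v, X u < X t) :
    ReachableWithin G N u v (X v + Y v - (X u + Y u)) :=
  huv.reachableWithin_of_detour F hright le_rfl fun w hw hwu _ ↦
    absurd (hstart w (huv.mem_leftOf_of_isRival hw hwu)) hwu.not_gt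

variable [Finite P] (H : OneSidedBoundsBelow G N (leftOf X Y u v).ncard)

include H

lemma reachableWithin_of_add_lt (hstart : ∀ t ∈ leftOf X Y u v, X u + Y u < X t + Y t) :
    ReachableWithin G N u v (X v + Y v - (X u + Y u) + (Y v - Y u)) :=
  huv.reachableWithin_of_detour F hright (by linarith [huv.y_lt]) fun _ hw hwu hadj ↦
    huv.detour_of_add_lt F hw hwu hadj (huv.oneSidedBounds_of_isRival F H hw hwu) fun t ht ↦
      hstart t (F.leftOf_subset_leftOf_start (huv.mem_leftOf_of_isRival hw hwu) ht)

lemma reachableWithin_of_y_lt (hstart : ∀ t ∈ leftOf X Y u v, Y u < Y t) :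
    ReachableWithin G N u v (X v + Y v - (X u + Y u) + 2 * (Y v - Y u)) :=
  huv.reachableWithin_of_detour F hright (by linarith [huv.y_lt]) fun _ hw hwu hadj ↦
    huv.detour_of_y_lt F hw hwu hadj (huv.oneSidedBounds_of_isRival F H hw hwu) fun t ht ↦
      hstart t (F.leftOf_subset_leftOf_start (huv.mem_leftOf_of_isRival hw hwu) ht)

end FirstStep

lemma forwardBounds [Finite P] (F : HexFrame G N X Y) (huv : IsNearest X Y u v)
    (hclear : RightClear X Y u v) (H : OneSidedBoundsBelow G N (leftOf X Y u v).ncard) :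
    ForwardBounds G N X Y u v := by
  have hx := huv.x_lt
  have hy := huv.y_lt
  have hright : ∀ t, IsRival X Y u v t → Y u ≤ Y t :=
    fun t ht ↦ hclear.le_of_isRival hx hy ht le_rfl
  constructor <;> intro hstart _
  · exact (huv.reachableWithin_of_x_lt F hright hstart).mono (by linarith)
  · exact (huv.reachableWithin_of_add_lt F hright H hstart).mono (by linarith)
  · exact (huv.reachableWithin_of_add_lt F hright H hstart).mono (by linarith)
  · exact (huv.reachableWithin_of_y_lt F hright H hstart).mono (by linarith)
  · exact (huv.reachableWithin_of_y_lt F hright H hstart).mono (by linarith)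

end IsNearest

namespace HexFrame

lemma forwardBounds_of_mem_box (F : HexFrame G N X Y) (hclear : RightClear X Y u v)
    (hs : s ∈ box X Y u v) (hus : OneSidedBounds G N X Y u s) (hsv : OneSidedBounds G N X Y s v) :
    ForwardBounds G N X Y u v := by
  have hmem := hclear.mem_leftOf_of_mem_box F hs
  obtain ⟨hux, huy, hxv, hyv⟩ := hs
  have below_s : ∀ t ∈ leftOf X Y u s, Y t < Y s := fun t ht ↦ by
    linarith [F.lt_middle_of_mem_leftOf_start hmem ht (a := 0) (b := 1) (by linarith) (by linarith)]
  have after_s : ∀ t ∈ leftOf X Y s v, X s < X t := fun t ht ↦ by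
    linarith [F.middle_lt_of_mem_leftOf_finish hmem ht (a := 1) (b := 0) (by linarith)
      (by linarith)]
  have start_subset := F.leftOf_subset_leftOf_start hmem
  have finish_subset := F.leftOf_subset_leftOf_finish hmem
  constructor <;> intro hstart hfinish <;>
    replace hstart := fun t ht ↦ hstart t (start_subset ht) <;>
    replace hfinish := fun t ht ↦ hfinish t (finish_subset ht)
  · exact ((hus.xy hstart below_s).trans (hsv.xy after_s hfinish)).mono (by linarith)
  · exact ((hus.zy hstart below_s).trans (hsv.xy after_s hfinish)).mono (by linarith)
  · exact ((hus.zy hstart below_s).trans (hsv.xz after_s hfinish)).mono (by linarith)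
  · exact ((hus.yy hstart below_s).trans (hsv.xy after_s hfinish)).mono (by linarith)
  · exact ((hus.yy hstart below_s).trans (hsv.xz after_s hfinish)).mono (by linarith)

lemma rightClear_of_above (F : HexFrame G N X Y) (hx : X u < X v) (hy : Y u < Y v)
    (hbox : ∀ t, t ∉ box X Y u v) (hxp : X u < X p) (hyp : Y v < Y p)
    (hzp : X p + Y p < X v + Y v) (hright : ∀ t, IsRival X Y p v t → Y u ≤ Y t) :
    RightClear (fun p ↦ -Y p) (fun p ↦ X p + Y p) p v := by
  have hp : 0 < orient X Y u v p := orient_pos_of_above hx hy (by linarith) hyp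
  have left_of_line : ∀ t, orient X Y p v t < 0 → X t < X v → Y v < Y t → X t ≤ X p := by
    intro t ht htx hty
    have htv : 0 < orient X Y u v t := orient_pos_of_above hx hy htx.le hty
    linarith [F.le_of_mem_angle (u := v) (v := p) (r := u) (t := t) (by rwa [orient_cycle])
      (by rw [orient_flip]; linarith) (by rw [orient_flip]; linarith) (a := -1) (b := 0)
      (m := -X p) (by linarith) (by linarith) (by linarith)]
  have hrot : ∀ t, orient (fun p ↦ -Y p) (fun p ↦ X p + Y p) p v t = orient X Y p v t := by
    intro t; unfold orient; ring
  constructor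
  · intro t ht htyp htzp
    rw [hrot] at ht
    by_contra! htxv
    have hxpt : X p < X t := by linarith
    rcases lt_trichotomy (Y t) (Y v) with hty | hty | hty
    · rcases (hright t ⟨by linarith, hty, htzp⟩).lt_or_eq with hut | hut
      · exact hbox t ⟨hxp.trans hxpt, hut, by linarith, hty⟩
      · exact (hxp.trans hxpt).ne (congrArg X (F.injective_y hut))
    · linarith [congrArg X (F.injective_y hty)]
    · linarith [left_of_line t ht (by linarith) hty]
  · intro t ht htyp htzp
    rw [hrot] at ht
    by_contra! hlt
    linarith [left_of_line t ht (by linarith) (by linarith)]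

lemma forwardBounds_of_above [Finite P] (F : HexFrame G N X Y) (hx : X u < X v) (hy : Y u < Y v)
    (hclear : RightClear X Y u v) (hbox : ∀ t, t ∉ box X Y u v) (hup : IsNearest X Y u p)
    (hyp : Y v < Y p) (hzp : X p + Y p < X v + Y v)
    (H : OneSidedBoundsBelow G N (leftOf X Y u v).ncard) : ForwardBounds G N X Y u v := by
  have hmem : p ∈ leftOf X Y u v := hclear.mem_leftOf F hup.x_lt hup.y_lt hzp
  have not_below_v : ¬ ∀ t ∈ leftOf X Y u v, Y t < Y v := fun h ↦ hyp.not_gt (h p hmem)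
  have Hup := H.mono (F.ncard_leftOf_start_lt hmem).le
  have hright : ∀ t, IsRival X Y u p t → Y u ≤ Y t :=
    fun t ht ↦ hclear.le_of_isRival hx hy ht (by linarith)
  have start_subset := F.leftOf_subset_leftOf_start hmem
  have hpv : (∀ t ∈ leftOf X Y u v, X t + Y t < X v + Y v) →
      ReachableWithin G N p v ((Y p - Y v) + 2 * (X v + Y v - (X p + Y p))) := by
    intro hfinish
    have hclear_pv := F.rightClear_of_above hx hy hbox hup.x_lt hyp hzp fun t ht ↦
      hclear.le_of_isRival hx hy ⟨ht.x_lt, ht.y_lt, by linarith [ht.add_lt, hup.x_lt]⟩ le_rfl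
    have O := H F.rotate_inv (neg_lt_neg hyp) hzp hclear_pv
      (by rw [leftOf_rotate_inv]; exact F.ncard_leftOf_finish_lt hmem)
    refine (O.zy ?_ ?_).mono (by linarith)
    all_goals rw [leftOf_rotate_inv]
    · intro t ht
      linarith [F.middle_lt_of_mem_leftOf_finish hmem ht (a := 1) (b := 0)
        (by linarith [hup.x_lt]) (by linarith)]
    · exact fun t ht ↦ hfinish t (F.leftOf_subset_leftOf_finish hmem ht)
  constructor <;> intro hstart hfinish
  · exact absurd hfinish not_below_v
  · exact absurd hfinish not_below_v
  · exact ((hup.reachableWithin_of_add_lt F hright Hup fun t ht ↦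
      hstart t (start_subset ht)).trans (hpv hfinish)).mono (by linarith [hup.x_lt])
  · exact absurd hfinish not_below_v
  · exact ((hup.reachableWithin_of_y_lt F hright Hup fun t ht ↦
      hstart t (start_subset ht)).trans (hpv hfinish)).mono (by linarith [hup.x_lt])

lemma forwardBounds [Finite P] (F : HexFrame G N X Y) (hx : X u < X v) (hy : Y u < Y v)
    (hclear : RightClear X Y u v) (H : OneSidedBoundsBelow G N (leftOf X Y u v).ncard) :
    ForwardBounds G N X Y u v := by
  by_cases hbox : ∃ s, s ∈ box X Y u v
  · obtain ⟨s, hs⟩ := hbox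
    have hmem := hclear.mem_leftOf_of_mem_box F hs
    exact F.forwardBounds_of_mem_box hclear hs
      (H F hs.1 hs.2.1 (hclear.start_of_mem_box F hs) (F.ncard_leftOf_start_lt hmem))
      (H F hs.2.2.1 hs.2.2.2 (hclear.finish_of_mem_box F hs) (F.ncard_leftOf_finish_lt hmem))
  push Not at hbox
  obtain ⟨p, hup⟩ := exists_isNearest hx hy
  rcases eq_or_ne p v with rfl | hpv
  · exact hup.forwardBounds F hclear H
  have hzp : X p + Y p < X v + Y v := (hup.add_le v hx hy).lt_of_ne (F.injective_add.ne hpv)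
  refine F.forwardBounds_of_above hx hy hclear hbox hup ?_ hzp H
  by_contra! hyp
  have hmem := hclear.mem_leftOf F hup.x_lt hup.y_lt hzp
  have hyp' := hyp.lt_of_ne (F.injective_y.ne hpv)
  refine hbox p ⟨hup.x_lt, hup.y_lt, ?_, hyp'⟩
  by_contra! hxp
  exact (orient_neg_of_le_right hx hy hxp hyp').not_gt hmem

end HexFrame

lemma oneSidedBoundsBelow [Finite P] (n : ℕ) : OneSidedBoundsBelow G N n := by
  induction n with
  | zero => exact fun _ _ _ _ _ _ _ _ hcard ↦ absurd hcard (Nat.not_lt_zero _)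
  | succ n ih =>
    intro X Y u v F hx hy hclear hcard
    have H := ih.mono (Nat.lt_succ_iff.1 hcard)
    refine (F.forwardBounds hx hy hclear H).oneSidedBounds F ?_
    exact F.mirror.forwardBounds (neg_lt_neg hy) (neg_lt_neg hx) hclear.mirror
      (by rwa [leftOf_mirror])

lemma HexFrame.oneSidedBounds [Finite P] (F : HexFrame G N X Y) (hx : X u < X v) (hy : Y u < Y v)
    (hclear : RightClear X Y u v) : OneSidedBounds G N X Y u v :=
  oneSidedBoundsBelow _ F hx hy hclear (Nat.lt_succ_self _)

end OneSided

/-! ### Discarded edges -/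

section Discarded

variable {P : Type*} [Finite P] {G : SimpleGraph P} {N : P → P → ℝ} {X Y : P → ℝ} {u v w p q : P}

namespace IsNearest

lemma reachableWithin_of_isRival (F : HexFrame G N X Y) (huv : IsNearest X Y u v)
    (hw : IsRival X Y u v w) (hwu : X w < X u) (hadj : G.Adj w v) :
    ReachableWithin G N u v (X v + Y v - (X u + Y u) + 3 * (Y v - Y u)) :=
  huv.detour F hw hwu hadj (huv.oneSidedBounds_of_isRival F (oneSidedBoundsBelow _) hw hwu)

lemma reachableWithin_of_isRival_of_below (F : HexFrame G N X Y) (huv : IsNearest X Y u v)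
    (hw : IsRival X Y u v w) (hwu : X w < X u) (hadj : G.Adj w v) (hyq : Y q < Y u)
    (hzq : X u + Y u < X q + Y q) :
    ReachableWithin G N u v (X v + Y v - (X u + Y u) + 2 * (Y v - Y u)) := by
  refine huv.detour_of_y_lt F hw hwu hadj
    (huv.oneSidedBounds_of_isRival F (oneSidedBoundsBelow _) hw hwu) fun t ht ↦ ?_
  have htx := (huv.lt_of_mem_leftOf_rival F hw hwu ht).1
  by_contra! hty
  have hxq : X u < X q := by linarith
  refine F.not_mem_triangle t q v u ?_ ?_ ?_
  · rw [orient_cycle]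
    unfold orient
    linarith [mul_pos (sub_pos.2 htx) (sub_pos.2 hyq),
      mul_nonneg (sub_nonneg.2 hty) (sub_pos.2 hxq).le]
  · rw [orient_cycle]
    unfold orient
    linarith [mul_pos (sub_pos.2 hxq) (sub_pos.2 huv.y_lt),
      mul_pos (sub_pos.2 hyq) (sub_pos.2 huv.x_lt)]
  · rw [orient_cycle]
    exact F.leftOf_subset_leftOf_start (huv.mem_leftOf_of_isRival hw hwu) ht

lemma reachableWithin (F : HexFrame G N X Y) (huv : IsNearest X Y u v) :
    ReachableWithin G N u v (4 * (X v + Y v - (X u + Y u))) := by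
  have hx := huv.x_lt
  have hy := huv.y_lt
  rcases F.adj_or_exists_rival huv with hadj | ⟨w, hw, hwu, hadj⟩ | ⟨w, hw, hwu, hadj⟩
  · exact (F.reachableWithin_of_adj hadj hx hy).mono (by linarith)
  · exact (huv.reachableWithin_of_isRival F hw hwu hadj).mono (by linarith)
  · exact (huv.swap.reachableWithin_of_isRival F.swap hw.swap hwu hadj).mono (by linarith)

end IsNearest

namespace HexFrame

section Above

variable (F : HexFrame G N X Y) (hx : X u < X v) (hy : Y u < Y v) (hbox : ∀ t, t ∉ box X Y u v)
  (hyp : Y v < Y p) (hzp : X p + Y p < X v + Y v)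

include F hx hy hbox hyp hzp

lemma reachableWithin_above (hxp : X u < X p) (hright : ∀ t, IsRival X Y p v t → Y u ≤ Y t) :
    ReachableWithin G N p v (3 * (Y p - Y v) + 4 * (X v + Y v - (X p + Y p))) := by
  have hmem : p ∈ leftOf X Y u v := orient_pos_of_above hx hy (by linarith) hyp
  have O := F.rotate_inv.oneSidedBounds (neg_lt_neg hyp) hzp
    (F.rightClear_of_above hx hy hbox hxp hyp hzp hright)
  refine (O.zx ?_ ?_).mono (by linarith)
  all_goals
    rw [leftOf_rotate_inv]
    intro t ht
  · linarith [F.middle_lt_of_mem_leftOf_finish hmem ht (a := 1) (b := 0)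
      (by linarith) (by linarith)]
  · linarith [F.finish_lt_of_mem_leftOf_finish hmem ht (a := 0) (b := 1) (by linarith)
      (by linarith)]

variable (hup : IsNearest X Y u p)

include hup

lemma reachableWithin_of_no_rival_below (hright : ∀ t, IsRival X Y u v t → Y u ≤ Y t) :
    ReachableWithin G N u v (4 * (X v + Y v - (X u + Y u)) + 3 * (X v - X u)) := by
  have hxp := hup.x_lt
  have hup' : ReachableWithin G N u p (X p + Y p - (X u + Y u) + 3 * (Y p - Y u)) := by
    refine hup.reachableWithin_of_detour F (fun t ht ↦ ?_) (by linarith)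
      fun w hw hwu hadj ↦ hup.reachableWithin_of_isRival F hw hwu hadj
    by_contra! htu
    exact htu.not_ge (hright t ⟨by linarith [ht.x_lt], by linarith, ht.add_lt⟩)
  have hpv := F.reachableWithin_above hx hy hbox hyp hzp hxp fun t ht ↦
    hright t ⟨ht.x_lt, ht.y_lt, by linarith [ht.add_lt]⟩
  exact (hup'.trans hpv).mono (by linarith)

lemma reachableWithin_of_no_nearer_rival_below (hyq : Y q < Y u)
    (hzq : X u + Y u < X q + Y q) (hright : ∀ t, IsRival X Y p v t → Y u ≤ Y t) :
    ReachableWithin G N u v (6 * (X v + Y v - (X u + Y u))) := by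
  have hxp := hup.x_lt
  have hyup := hup.y_lt
  have hpv := F.reachableWithin_above hx hy hbox hyp hzp hxp hright
  rcases F.adj_or_exists_rival hup with hadj | ⟨w, hw, hwu, hadj⟩ | ⟨w, hw, hwu, hadj⟩
  · exact ((F.reachableWithin_of_adj hadj hxp hyup).trans hpv).mono (by linarith)
  · exact ((hup.reachableWithin_of_isRival_of_below F hw hwu hadj hyq hzq).trans hpv).mono
      (by linarith)
  · exact ((hup.swap.reachableWithin_of_isRival F.swap hw.swap hwu hadj).trans hpv).mono
      (by linarith)

end Above

end HexFrame

end Discarded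

/-! ### Ladders -/

section Ladders

variable {P : Type*} {G : SimpleGraph P} {N : P → P → ℝ} {X Y : P → ℝ} {u v a b c e g l m s t : P}

/-- The points between `u` and `v` in both functionals `X` and `Z = X + Y`. -/
def band (X Y : P → ℝ) (u v : P) : Set P :=
  {t | X u < X t ∧ X u + Y u < X t + Y t ∧ X t < X v ∧ X t + Y t < X v + Y v}

/-- The points of the band that are above both `u` and `v`. -/
def upper (X Y : P → ℝ) (u v : P) : Set P := {t ∈ band X Y u v | Y u < Y t ∧ Y v < Y t}

/-- The points of the band that are below both `u` and `v`. -/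
def lower (X Y : P → ℝ) (u v : P) : Set P := {t ∈ band X Y u v | Y t < Y u ∧ Y t < Y v}

/-- The band of `u, v` consists of two chains, one above and one below both points, and each of
the four nearest neighbours of `u` and `v` towards the chains belongs to the band. -/
structure Ladder (X Y : P → ℝ) (u v : P) : Prop where
  x_lt : X u < X v
  add_lt : X u + Y u < X v + Y v
  band_subset : band X Y u v ⊆ upper X Y u v ∪ lower X Y u v
  start_upper : ∃ p ∈ upper X Y u v, IsNearest X Y u p
  start_lower : ∃ p ∈ lower X Y u v, IsNearest (fun p ↦ X p + Y p) (fun p ↦ -Y p) u p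
  finish_upper : ∃ p ∈ upper X Y u v, IsNearest (fun p ↦ -(X p + Y p)) Y v p
  finish_lower : ∃ p ∈ lower X Y u v, IsNearest (fun p ↦ -X p) (fun p ↦ -Y p) v p

/-- `s, t` are consecutive points of the chain `C`, completed by `u` at its start and by `v` at its
end. -/
structure IsStep (C : Set P) (X Y : P → ℝ) (u v s t : P) : Prop where
  start_mem : s = u ∨ s ∈ C
  finish_mem : t = v ∨ t ∈ C
  x_lt : X s < X t
  add_lt : X s + Y s < X t + Y t
  notMem_band : ∀ c ∈ C, c ∉ band X Y s t

/-- `a` is the highest point of the upper chain. -/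
structure IsPeak (X Y : P → ℝ) (u v a : P) : Prop where
  mem : a ∈ upper X Y u v
  le : ∀ c ∈ upper X Y u v, Y c ≤ Y a

/-- `b` is the lowest point of the lower chain. -/
structure IsTrough (X Y : P → ℝ) (u v b : P) : Prop where
  mem : b ∈ lower X Y u v
  le : ∀ c ∈ lower X Y u v, Y b ≤ Y c

/-- `t` is reached from `s` at three times the increment of `X` and `Z = X + Y`, a cost that is
additive along the chains of a ladder. -/
def BandReachable (G : SimpleGraph P) (N : P → P → ℝ) (X Y : P → ℝ) (s t : P) : Prop :=
  ReachableWithin G N s t (3 * ((X t - X s) + (X t + Y t - (X s + Y s))))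

lemma band_reflect (u v : P) :
    band (fun p ↦ X p + Y p) (fun p ↦ -Y p) u v = band X Y u v := by
  ext t
  simp only [band, Set.mem_ofPred_eq, add_neg_cancel_right]
  tauto

lemma band_reverse (u v : P) : band (fun p ↦ -(X p + Y p)) Y v u = band X Y u v := by
  ext t
  simp only [band, Set.mem_ofPred_eq]
  constructor <;> rintro ⟨h₁, h₂, h₃, h₄⟩ <;> refine ⟨?_, ?_, ?_, ?_⟩ <;> linarith

lemma upper_reflect (u v : P) :
    upper (fun p ↦ X p + Y p) (fun p ↦ -Y p) u v = lower X Y u v := by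
  simp only [upper, lower, band_reflect, neg_lt_neg_iff]

lemma lower_reflect (u v : P) :
    lower (fun p ↦ X p + Y p) (fun p ↦ -Y p) u v = upper X Y u v := by
  simp only [upper, lower, band_reflect, neg_lt_neg_iff]

lemma upper_reverse (u v : P) : upper (fun p ↦ -(X p + Y p)) Y v u = upper X Y u v := by
  simp only [upper, band_reverse, and_comm]

lemma lower_reverse (u v : P) : lower (fun p ↦ -(X p + Y p)) Y v u = lower X Y u v := by
  simp only [lower, band_reverse, and_comm]

lemma band_subset_band_start (ht : t ∈ band X Y u v) : band X Y u t ⊆ band X Y u v :=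
  fun _ hs ↦ ⟨hs.1, hs.2.1, hs.2.2.1.trans ht.2.2.1, hs.2.2.2.trans ht.2.2.2⟩

lemma HexFrame.reverse (F : HexFrame G N X Y) : HexFrame G N (fun p ↦ -(X p + Y p)) Y := by
  simpa using F.rotate_inv.rotate_half.swap

lemma IsPeak.reflect (ha : IsPeak X Y u v a) :
    IsTrough (fun p ↦ X p + Y p) (fun p ↦ -Y p) u v a := by
  constructor
  · rw [lower_reflect]
    exact ha.mem
  · rw [lower_reflect]
    exact fun c hc ↦ neg_le_neg (ha.le c hc)

lemma IsTrough.reflect (hb : IsTrough X Y u v b) :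
    IsPeak (fun p ↦ X p + Y p) (fun p ↦ -Y p) u v b := by
  constructor
  · rw [upper_reflect]
    exact hb.mem
  · rw [upper_reflect]
    exact fun c hc ↦ neg_le_neg (hb.le c hc)

lemma IsPeak.reverse (ha : IsPeak X Y u v a) : IsPeak (fun p ↦ -(X p + Y p)) Y v u a := by
  constructor
  · rw [upper_reverse]
    exact ha.mem
  · rw [upper_reverse]
    exact ha.le

lemma IsTrough.reverse (hb : IsTrough X Y u v b) :
    IsTrough (fun p ↦ -(X p + Y p)) Y v u b := by
  constructor
  · rw [lower_reverse]
    exact hb.mem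
  · rw [lower_reverse]
    exact hb.le

namespace IsStep

variable {C : Set P}

lemma reflect (h : IsStep C X Y u v s t) :
    IsStep C (fun p ↦ X p + Y p) (fun p ↦ -Y p) u v s t where
  start_mem := h.start_mem
  finish_mem := h.finish_mem
  x_lt := h.add_lt
  add_lt := by simpa using h.x_lt
  notMem_band := by simpa only [band_reflect] using h.notMem_band

lemma reverse (h : IsStep C X Y u v s t) : IsStep C (fun p ↦ -(X p + Y p)) Y v u t s where
  start_mem := h.finish_mem
  finish_mem := h.start_mem
  x_lt := neg_lt_neg h.add_lt
  add_lt := by linarith [h.x_lt]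
  notMem_band := by simpa only [band_reverse] using h.notMem_band

section

variable (hC : C ⊆ band X Y u v)
  (hmono : ∀ a ∈ C, ∀ b ∈ C, (X a + Y a < X b + Y b ↔ X a < X b))

include hC

lemma band_subset (h : IsStep C X Y u v s t) : band X Y s t ⊆ band X Y u v := by
  have hs : X u ≤ X s ∧ X u + Y u ≤ X s + Y s := by
    rcases h.start_mem with rfl | hs
    · exact ⟨le_rfl, le_rfl⟩
    · exact ⟨(hC hs).1.le, (hC hs).2.1.le⟩
  have ht : X t ≤ X v ∧ X t + Y t ≤ X v + Y v := by
    rcases h.finish_mem with rfl | ht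
    · exact ⟨le_rfl, le_rfl⟩
    · exact ⟨(hC ht).2.2.1.le, (hC ht).2.2.2.le⟩
  rintro r ⟨hsx, hsz, htx, htz⟩
  exact ⟨hs.1.trans_lt hsx, hs.2.trans_lt hsz, htx.trans_le ht.1, htz.trans_le ht.2⟩

include hmono

lemma le_of_lt (h : IsStep C X Y u v s t) (hc : c ∈ C) (hct : X c < X t) : X c ≤ X s := by
  by_contra! hsc
  refine h.notMem_band c hc ⟨hsc, ?_, hct, ?_⟩
  · rcases h.start_mem with rfl | hs
    exacts [(hC hc).2.1, (hmono s hs c hc).2 hsc]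
  · rcases h.finish_mem with rfl | ht
    exacts [(hC hc).2.2.2, (hmono c hc t ht).2 hct]

lemma exists_of_finish [Finite P] (ht : t ∈ C) : ∃ s, IsStep C X Y u v s t := by
  obtain ⟨s, ⟨hs, hst⟩, hmax⟩ := Set.exists_max_image {s | (s = u ∨ s ∈ C) ∧ X s < X t} X
    (Set.toFinite _) ⟨u, .inl rfl, (hC ht).1⟩
  refine ⟨s, hs, .inr ht, hst, ?_, fun c hc hst ↦ ?_⟩
  · rcases hs with rfl | hs
    exacts [(hC ht).2.1, (hmono s hs t ht).2 hst]
  · exact hst.1.not_ge (hmax c ⟨.inr hc, hst.2.2.1⟩)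

lemma exists_of_start [Finite P] (hs : s ∈ C) : ∃ t, IsStep C X Y u v s t := by
  obtain ⟨t, ht⟩ := exists_of_finish (X := fun p ↦ -(X p + Y p)) (Y := Y) (u := v) (v := u)
    (by rwa [band_reverse]) (fun a ha b hb ↦
      ⟨fun h ↦ neg_lt_neg ((hmono b hb a ha).2 (by linarith)),
        fun h ↦ by linarith [(hmono b hb a ha).1 (neg_lt_neg_iff.1 h)]⟩) hs
  exact ⟨t, by simpa using ht.reverse⟩

end

end IsStep

namespace BandReachable

lemma refl (u : P) : BandReachable G N X Y u u := by
  simpa [BandReachable] using ReachableWithin.refl (G := G) (N := N) u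

lemma trans (hst : BandReachable G N X Y s t) (htl : BandReachable G N X Y t l) :
    BandReachable G N X Y s l :=
  (ReachableWithin.trans hst htl).mono (by linarith)

lemma of_adj (F : HexFrame G N X Y) (h : G.Adj s t) (hx : X s < X t)
    (hz : X s + Y s < X t + Y t) : BandReachable G N X Y s t :=
  (ReachableWithin.of_adj h).mono (by linarith [F.dist_le_of_lt hx hz])

lemma of_reflect (h : BandReachable G N (fun p ↦ X p + Y p) (fun p ↦ -Y p) s t) :
    BandReachable G N X Y s t :=
  ReachableWithin.mono h (by linarith)

lemma reflect (h : BandReachable G N X Y s t) :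
    BandReachable G N (fun p ↦ X p + Y p) (fun p ↦ -Y p) s t :=
  ReachableWithin.mono h (by linarith)

lemma of_reverse (F : HexFrame G N X Y) (h : BandReachable G N (fun p ↦ -(X p + Y p)) Y t s) :
    BandReachable G N X Y s t :=
  (F.reachableWithin_symm h).mono (by linarith)

end BandReachable

namespace Ladder

lemma reflect (H : Ladder X Y u v) : Ladder (fun p ↦ X p + Y p) (fun p ↦ -Y p) u v where
  x_lt := H.add_lt
  add_lt := by simpa using H.x_lt
  band_subset := by
    rw [band_reflect, upper_reflect, lower_reflect, Set.union_comm]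
    exact H.band_subset
  start_upper := by simpa only [upper_reflect] using H.start_lower
  start_lower := by simpa [lower_reflect] using H.start_upper
  finish_upper := by simpa [upper_reflect] using H.finish_lower
  finish_lower := by simpa [lower_reflect] using H.finish_upper

lemma reverse (H : Ladder X Y u v) : Ladder (fun p ↦ -(X p + Y p)) Y v u where
  x_lt := neg_lt_neg H.add_lt
  add_lt := by linarith [H.x_lt]
  band_subset := by
    rw [band_reverse, upper_reverse, lower_reverse]
    exact H.band_subset
  start_upper := by simpa only [upper_reverse] using H.finish_upper
  start_lower := by
    rw [lower_reverse]
    simpa using H.finish_lower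
  finish_upper := by
    rw [upper_reverse]
    simpa using H.start_upper
  finish_lower := by
    rw [lower_reverse]
    simpa using H.start_lower

lemma orient_pos_of_mem_upper (H : Ladder X Y u v) (hb : b ∈ upper X Y u v) :
    0 < orient X Y u v b := by
  obtain ⟨⟨hxu, -, hxv, -⟩, hyu, hyv⟩ := hb
  have hx := H.x_lt
  rcases le_or_gt (Y v) (Y u) with h | h
  · unfold orient
    linarith [mul_nonneg (sub_nonneg.2 h) (sub_pos.2 hxu).le,
      mul_pos (sub_pos.2 hx) (sub_pos.2 hyu)]
  · exact orient_pos_of_above hx h hxv.le hyv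

lemma add_lt_of_mem_upper (F : HexFrame G N X Y) (H : Ladder X Y u v) (ha : a ∈ upper X Y u v)
    (hb : b ∈ upper X Y u v) (hab : X a < X b) : X a + Y a < X b + Y b := by
  by_contra! hle
  have hz : X b + Y b < X a + Y a :=
    hle.lt_of_ne (F.injective_add.ne (by rintro rfl; exact hab.false))
  have hpos := H.orient_pos_of_mem_upper hb
  obtain ⟨⟨hxa, hza, -⟩, -⟩ := ha
  obtain ⟨⟨-, -, hxb, hzb⟩, -⟩ := hb
  refine F.not_mem_triangle u v a b hpos ?_ ?_ <;> rw [← orient_rotate] <;> unfold orient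
  · linarith [mul_pos (sub_pos.2 hxb) (sub_pos.2 hz), mul_pos (sub_pos.2 hab) (sub_pos.2 hzb)]
  · linarith [mul_pos (sub_pos.2 hab) (sub_pos.2 hza), mul_pos (sub_pos.2 hz) (sub_pos.2 hxa)]

lemma add_lt_iff_of_mem_upper (F : HexFrame G N X Y) (H : Ladder X Y u v)
    (ha : a ∈ upper X Y u v) (hb : b ∈ upper X Y u v) :
    X a + Y a < X b + Y b ↔ X a < X b := by
  refine ⟨fun hz ↦ ?_, H.add_lt_of_mem_upper F ha hb⟩
  by_contra! hle
  rcases hle.lt_or_eq with hlt | heq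
  · exact hz.not_gt (H.add_lt_of_mem_upper F hb ha hlt)
  · rw [F.injective_x heq] at hz
    exact hz.false

lemma add_lt_iff_of_mem_lower (F : HexFrame G N X Y) (H : Ladder X Y u v)
    (ha : a ∈ lower X Y u v) (hb : b ∈ lower X Y u v) :
    X a + Y a < X b + Y b ↔ X a < X b := by
  rw [← upper_reflect] at ha hb
  simpa using (H.reflect.add_lt_iff_of_mem_upper F.reflect ha hb).symm

lemma add_le_iff_of_mem_upper (F : HexFrame G N X Y) (H : Ladder X Y u v)
    (ha : a ∈ upper X Y u v) (hb : b ∈ upper X Y u v) :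
    X a + Y a ≤ X b + Y b ↔ X a ≤ X b := by
  simpa only [not_lt] using not_congr (H.add_lt_iff_of_mem_upper F hb ha)

lemma add_le_iff_of_mem_lower (F : HexFrame G N X Y) (H : Ladder X Y u v)
    (ha : a ∈ lower X Y u v) (hb : b ∈ lower X Y u v) :
    X a + Y a ≤ X b + Y b ↔ X a ≤ X b := by
  simpa only [not_lt] using not_congr (H.add_lt_iff_of_mem_lower F hb ha)

lemma orient_start_pos_of_mem_upper (F : HexFrame G N X Y) (H : Ladder X Y u v)
    (hs : s ∈ upper X Y u v) (ht : t ∈ upper X Y u v) (hst : X s < X t) :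
    0 < orient X Y u t s := by
  have hut : u ≠ t := by rintro rfl; exact ht.1.1.false
  rcases F.eq_or_orient_neg_or_pos hut s with rfl | rfl | h | h
  · exact absurd hs.1.1 (lt_irrefl _)
  · exact absurd hst (lt_irrefl _)
  · linarith [F.le_of_mem_angle (H.orient_pos_of_mem_upper ht) (H.orient_pos_of_mem_upper hs) h
      (a := 1) (b := 0) (m := X t) (by linarith [ht.1.1]) (by linarith)
      (by linarith [ht.1.2.2.1])]
  · exact h

lemma lt_or_lt_of_mem_upper (F : HexFrame G N X Y) (H : Ladder X Y u v) (hs : s ∈ upper X Y u v)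
    (ht : t ∈ upper X Y u v) (hm : m ∈ upper X Y u v) (hst : X s < X t) (htm : X t < X m) :
    Y s < Y t ∨ Y m < Y t := by
  by_contra! hvalley
  have hys : Y t < Y s := hvalley.1.lt_of_ne (F.injective_y.ne (by rintro rfl; exact hst.false))
  refine F.not_mem_triangle u m s t (H.orient_start_pos_of_mem_upper F ht hm htm) ?_ ?_
  · have hsplit : orient X Y m s t = (X m - X t) * (Y s - Y t) + (X t - X s) * (Y m - Y t) := by
      unfold orient; ring
    rw [hsplit]
    exact add_pos_of_pos_of_nonneg (mul_pos (sub_pos.2 htm) (sub_pos.2 hys))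
      (mul_nonneg (sub_pos.2 hst).le (sub_nonneg.2 hvalley.2))
  · rw [orient_cycle, orient_cycle]
    exact H.orient_start_pos_of_mem_upper F hs ht hst

lemma y_lt_of_le_peak (F : HexFrame G N X Y) (H : Ladder X Y u v) (ha : IsPeak X Y u v a)
    (hs : s ∈ upper X Y u v) (ht : t ∈ upper X Y u v) (hst : X s < X t) (hta : X t ≤ X a) :
    Y s < Y t := by
  rcases hta.lt_or_eq with hlt | heq
  · exact (H.lt_or_lt_of_mem_upper F hs ht ha.mem hst hlt).resolve_right (ha.le t ht).not_gt
  · rw [F.injective_x heq] at hst ⊢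
    exact (ha.le s hs).lt_of_ne (F.injective_y.ne (by rintro rfl; exact hst.false))

lemma y_lt_of_peak_le (F : HexFrame G N X Y) (H : Ladder X Y u v) (ha : IsPeak X Y u v a)
    (hs : s ∈ upper X Y u v) (ht : t ∈ upper X Y u v) (has : X a ≤ X s) (hst : X s < X t) :
    Y t < Y s := by
  refine H.reverse.y_lt_of_le_peak F.reverse ha.reverse (by rwa [upper_reverse])
    (by rwa [upper_reverse]) (neg_lt_neg (H.add_lt_of_mem_upper F hs ht hst)) (neg_le_neg ?_)
  exact (H.add_le_iff_of_mem_upper F ha.mem hs).2 has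

lemma y_lt_of_le_trough (F : HexFrame G N X Y) (H : Ladder X Y u v) (hb : IsTrough X Y u v b)
    (hs : s ∈ lower X Y u v) (ht : t ∈ lower X Y u v) (hst : X s < X t) (htb : X t ≤ X b) :
    Y t < Y s := by
  rw [← H.add_lt_iff_of_mem_lower F hs ht] at hst
  rw [← H.add_le_iff_of_mem_lower F ht hb.mem] at htb
  rw [← upper_reflect] at hs ht
  simpa using H.reflect.y_lt_of_le_peak F.reflect hb.reflect hs ht hst htb

lemma isNearest_of_isStep (F : HexFrame G N X Y) (H : Ladder X Y u v)
    (h : IsStep (upper X Y u v) X Y u v s t) (ht : t ∈ upper X Y u v) (hy : Y s < Y t) :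
    IsNearest X Y s t := by
  have hskip : ∀ r ∈ upper X Y u v, X s < X r → X s + Y s < X r + Y r →
      X t + Y t ≤ X r + Y r := fun r hr hxr hzr ↦ by
    by_contra! hrt
    exact h.notMem_band r hr ⟨hxr, hzr, (H.add_lt_iff_of_mem_upper F hr ht).1 hrt, hrt⟩
  rcases h.start_mem with rfl | hs
  · obtain ⟨p, hp, hnear⟩ := H.start_upper
    exact ⟨h.x_lt, hy, fun r hxr hyr ↦
      (hskip p hp hp.1.1 hp.1.2.1).trans (hnear.add_le r hxr hyr)⟩
  · refine ⟨h.x_lt, hy, fun r hxr hyr ↦ ?_⟩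
    by_contra! hrt
    obtain ⟨⟨hxs, -⟩, hyus, hyvs⟩ := hs
    have hzt := ht.1.2.2.2
    rcases H.band_subset (show r ∈ band X Y u v from
      ⟨by linarith, by linarith, by linarith, by linarith⟩) with hr | hr
    · exact (hskip r hr hxr (by linarith)).not_gt hrt
    · linarith [hr.2.1]

section Crossing

variable (F : HexFrame G N X Y) (H : Ladder X Y u v) (he : e ∈ lower X Y u v)
  (hm : m ∈ upper X Y u v) (hem : X e < X m)
  (hupper : ∀ r ∈ upper X Y u v, X r < X m → X r + Y r < X e + Y e)

include F H he hm hem hupper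

lemma isNearest_of_crossing (hg : g ∈ lower X Y u v) (hmg : X m + Y m < X g + Y g)
    (hyge : Y g < Y e) : IsNearest X Y e m := by
  obtain ⟨⟨hxe, hze, -⟩, heu, hev⟩ := id he
  obtain ⟨⟨-, -, hxm, hzm⟩, hmu, hmv⟩ := id hm
  have hxg := hg.1.2.2.1
  refine ⟨hem, by linarith, fun r hxr hyr ↦ ?_⟩
  by_contra! hrm
  rcases H.band_subset (show r ∈ band X Y u v from
    ⟨by linarith, by linarith, by linarith, by linarith⟩) with hr | hr
  · linarith [hupper r hr ((H.add_lt_iff_of_mem_upper F hr hm).1 hrm)]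
  · rw [← upper_reflect] at he hr hg
    rcases H.reflect.lt_or_lt_of_mem_upper F.reflect he hr hg (by linarith) (by linarith) with h | h
      <;> linarith

lemma adj_of_crossing (hg : g ∈ lower X Y u v) (hmg : X m + Y m < X g + Y g)
    (hyge : Y g < Y e) (hlower : ∀ r ∈ lower X Y u v, X e < X r → X m ≤ X r)
    (hl : l ∈ upper X Y u v) (hle : X l + Y l < X e + Y e) (hml : Y m < Y l) : G.Adj e m := by
  have heu := he.2.1
  obtain ⟨⟨-, -, -, hzm⟩, hmu, hmv⟩ := id hm
  have hxl := hl.1.1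
  rcases F.adj_or_exists_rival (H.isNearest_of_crossing F he hm hem hupper hg hmg hyge) with
    hadj | ⟨w, ⟨hxw, hyw, hzw⟩, hwe, -⟩ | ⟨w, ⟨hxw, -, hzw⟩, hwe, -⟩
  · exact hadj
  · rcases H.band_subset (show w ∈ band X Y u v from
      ⟨by linarith, by linarith, by linarith, by linarith⟩) with hw | hw
    · linarith [hupper w hw hxw]
    · linarith [(H.add_lt_iff_of_mem_lower F he hw).1 hzw]
  · rcases H.band_subset (show w ∈ band X Y u v from
      ⟨by linarith, by linarith, by linarith, by linarith⟩) with hw | hw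
    · linarith [hw.2.1]
    · linarith [hlower w hw (by linarith)]

end Crossing

variable [Finite P]

lemma bandReachable_or_exists_of_rise (F : HexFrame G N X Y) (H : Ladder X Y u v)
    (h : IsStep (upper X Y u v) X Y u v s t) (ht : t ∈ upper X Y u v) (hy : Y s < Y t) :
    BandReachable G N X Y s t ∨ ∃ c ∈ lower X Y u v, c ∈ band X Y s t ∧ G.Adj c t := by
  have hnear := H.isNearest_of_isStep F h ht hy
  obtain ⟨q, hyq, hzq⟩ : ∃ q, Y q < Y s ∧ X s + Y s < X q + Y q := by
    rcases h.start_mem with rfl | hs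
    · obtain ⟨q, hq, -⟩ := H.start_lower
      exact ⟨q, hq.2.1, hq.1.2.1⟩
    · exact ⟨v, hs.2.2, hs.1.2.2.2⟩
  have hx := h.x_lt
  rcases F.adj_or_exists_rival hnear with hadj | ⟨w, hw, hws, hadj⟩ | ⟨w, hw, hws, hadj⟩
  · exact .inl (.of_adj F hadj hx h.add_lt)
  · exact .inl ((hnear.reachableWithin_of_isRival_of_below F hw hws hadj hyq hzq).mono
      (by linarith))
  · have hwx := hw.x_lt
    have hwz := hw.add_lt
    have hmem : w ∈ band X Y s t := ⟨by linarith, hwz, hwx, by linarith⟩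
    exact .inr ⟨w, (H.band_subset (h.band_subset (Set.sep_subset _ _) hmem)).resolve_left
      fun hwu ↦ h.notMem_band w hwu hmem, hmem, hadj⟩

lemma bandReachable_or_exists_of_fall (F : HexFrame G N X Y) (H : Ladder X Y u v)
    (h : IsStep (upper X Y u v) X Y u v s t) (hs : s ∈ upper X Y u v) (hy : Y t < Y s) :
    BandReachable G N X Y s t ∨ ∃ c ∈ lower X Y u v, c ∈ band X Y s t ∧ G.Adj s c := by
  rw [← upper_reverse] at h hs
  refine (H.reverse.bandReachable_or_exists_of_rise F.reverse h.reverse hs hy).imp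
    (.of_reverse F) ?_
  rintro ⟨c, hc, hmem, hadj⟩
  rw [lower_reverse] at hc
  rw [band_reverse] at hmem
  exact ⟨c, hc, hmem, hadj.symm⟩

lemma bandReachable_or_exists_of_lower_fall (F : HexFrame G N X Y) (H : Ladder X Y u v)
    (h : IsStep (lower X Y u v) X Y u v s t) (ht : t ∈ lower X Y u v) (hy : Y t < Y s) :
    BandReachable G N X Y s t ∨ ∃ c ∈ upper X Y u v, c ∈ band X Y s t ∧ G.Adj c t := by
  rw [← upper_reflect] at h ht
  have hstep := H.reflect.bandReachable_or_exists_of_rise F.reflect h.reflect ht (neg_lt_neg hy)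
  rw [lower_reflect, band_reflect] at hstep
  exact hstep.imp_left .of_reflect

lemma bandReachable_of_mem_upper (F : HexFrame G N X Y) (H : Ladder X Y u v)
    (ha : IsPeak X Y u v a) (ht : t ∈ upper X Y u v) (hta : X t ≤ X a)
    (ih : ∀ s ∈ band X Y u t, BandReachable G N X Y u s) : BandReachable G N X Y u t := by
  obtain ⟨s, hst⟩ := IsStep.exists_of_finish (Set.sep_subset _ _)
    (fun _ hc _ hd ↦ H.add_lt_iff_of_mem_upper F hc hd) ht
  have hus : BandReachable G N X Y u s := by
    rcases hst.start_mem with rfl | hs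
    exacts [.refl s, ih s ⟨hs.1.1, hs.1.2.1, hst.x_lt, hst.add_lt⟩]
  have hy : Y s < Y t := by
    rcases hst.start_mem with rfl | hs
    exacts [ht.2.1, H.y_lt_of_le_peak F ha hs ht hst.x_lt hta]
  rcases H.bandReachable_or_exists_of_rise F hst ht hy with h | ⟨c, hc, ⟨-, -, hx, hz⟩, hadj⟩
  · exact hus.trans h
  · exact (ih c ⟨hc.1.1, hc.1.2.1, hx, hz⟩).trans (.of_adj F hadj hx hz)

lemma bandReachable_of_mem_lower (F : HexFrame G N X Y) (H : Ladder X Y u v)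
    (hb : IsTrough X Y u v b) (ht : t ∈ lower X Y u v) (htb : X t ≤ X b)
    (ih : ∀ s ∈ band X Y u t, BandReachable G N X Y u s) : BandReachable G N X Y u t := by
  rw [← add_le_iff_of_mem_lower F H ht hb.mem] at htb
  rw [← upper_reflect] at ht
  rw [← band_reflect] at ih
  exact .of_reflect (H.reflect.bandReachable_of_mem_upper F.reflect hb.reflect ht htb
    fun s hs ↦ (ih s hs).reflect)

lemma exists_blocked_upper_step (F : HexFrame G N X Y) (H : Ladder X Y u v)
    (ha : IsPeak X Y u v a) (hua : BandReachable G N X Y u a) (huv : ¬ BandReachable G N X Y u v) :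
    ∃ l ∈ upper X Y u v, ∃ m, IsStep (upper X Y u v) X Y u v l m ∧ Y m < Y l ∧
      ¬ BandReachable G N X Y u m ∧
      ∃ c ∈ lower X Y u v, c ∈ band X Y l m ∧ BandReachable G N X Y u c := by
  obtain ⟨l, ⟨hl, hul⟩, hmax⟩ := Set.exists_max_image
    {s | s ∈ upper X Y u v ∧ BandReachable G N X Y u s} X (Set.toFinite _) ⟨a, ha.mem, hua⟩
  obtain ⟨m, hlm⟩ := IsStep.exists_of_start (Set.sep_subset _ _)
    (fun _ hc _ hd ↦ H.add_lt_iff_of_mem_upper F hc hd) hl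
  have hum : ¬ BandReachable G N X Y u m := by
    rcases hlm.finish_mem with rfl | hm
    exacts [huv, fun h ↦ hlm.x_lt.not_ge (hmax m ⟨hm, h⟩)]
  have hy : Y m < Y l := by
    rcases hlm.finish_mem with rfl | hm
    exacts [hl.2.2, H.y_lt_of_peak_le F ha hl hm (hmax a ⟨ha.mem, hua⟩) hlm.x_lt]
  rcases H.bandReachable_or_exists_of_fall F hlm hl hy with h | ⟨c, hc, hcmem, hadj⟩
  · exact absurd (hul.trans h) hum
  · exact ⟨l, hl, m, hlm, hy, hum, c, hc, hcmem,
      hul.trans (.of_adj F hadj hcmem.1 hcmem.2.1)⟩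

lemma exists_blocked_lower_step (F : HexFrame G N X Y) (H : Ladder X Y u v)
    (hb : IsTrough X Y u v b) (hub : ¬ BandReachable G N X Y u b) (hc : c ∈ lower X Y u v)
    (huc : BandReachable G N X Y u c) (hcb : X c < X b) :
    ∃ k t, IsStep (lower X Y u v) X Y u v k t ∧ t ∈ lower X Y u v ∧ X c ≤ X k ∧ X t ≤ X b ∧
      (∃ d ∈ upper X Y u v, d ∈ band X Y k t) ∧
      ∀ s ∈ lower X Y u v, X c ≤ X s → X s < X t → BandReachable G N X Y u s := by
  obtain ⟨t, ⟨ht, hct, hut⟩, hmin⟩ := Set.exists_min_image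
    {s | s ∈ lower X Y u v ∧ X c ≤ X s ∧ ¬ BandReachable G N X Y u s} X (Set.toFinite _)
    ⟨b, hb.mem, hcb.le, hub⟩
  have hct : X c < X t := hct.lt_of_ne (F.injective_x.ne (by rintro rfl; exact hut huc))
  have htb : X t ≤ X b := hmin b ⟨hb.mem, hcb.le, hub⟩
  have hreach : ∀ s ∈ lower X Y u v, X c ≤ X s → X s < X t → BandReachable G N X Y u s :=
    fun s hs hcs hst ↦ by
      by_contra hus
      exact hst.not_ge (hmin s ⟨hs, hcs, hus⟩)
  have hmono : ∀ p ∈ lower X Y u v, ∀ q ∈ lower X Y u v,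
      (X p + Y p < X q + Y q ↔ X p < X q) := fun _ hp _ hq ↦ H.add_lt_iff_of_mem_lower F hp hq
  obtain ⟨k, hkt⟩ := IsStep.exists_of_finish (Set.sep_subset _ _) hmono ht
  have hck : X c ≤ X k := hkt.le_of_lt (Set.sep_subset _ _) hmono hc hct
  have hk : k ∈ lower X Y u v := by
    refine hkt.start_mem.resolve_left ?_
    rintro rfl
    exact hc.1.1.not_ge hck
  refine ⟨k, t, hkt, ht, hck, htb, ?_, hreach⟩
  rcases H.bandReachable_or_exists_of_lower_fall F hkt ht
    (H.y_lt_of_le_trough F hb hk ht hkt.x_lt htb) with h | ⟨d, hd, hdmem, -⟩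
  · exact absurd ((hreach k hk hck hkt.x_lt).trans h) hut
  · exact ⟨d, hd, hdmem⟩

section PeakFirst

variable (F : HexFrame G N X Y) (H : Ladder X Y u v) (ha : IsPeak X Y u v a)
  (hb : IsTrough X Y u v b) (hab : X a < X b)

include F H ha hb hab

lemma bandReachable_of_le_peak (ht : t ∈ band X Y u v) (hta : X t ≤ X a) :
    BandReachable G N X Y u t := by
  by_contra hbad
  obtain ⟨t, ⟨ht, hta, hbad⟩, hmin⟩ := Set.exists_min_image
    {t | t ∈ band X Y u v ∧ X t ≤ X a ∧ ¬ BandReachable G N X Y u t} X (Set.toFinite _)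
    ⟨t, ht, hta, hbad⟩
  have ih : ∀ s ∈ band X Y u t, BandReachable G N X Y u s := fun s hs ↦ by
    by_contra hsbad
    exact hs.2.2.1.not_ge
      (hmin s ⟨band_subset_band_start ht hs, (hs.2.2.1.trans_le hta).le, hsbad⟩)
  rcases H.band_subset ht with hup | hlow
  · exact hbad (H.bandReachable_of_mem_upper F ha hup hta ih)
  · exact hbad (H.bandReachable_of_mem_lower F hb hlow (hta.trans hab.le) ih)

lemma bandReachable_finish_of_trough_le (ht : t ∈ band X Y u v) (hbt : X b ≤ X t) :
    BandReachable G N X Y t v := by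
  refine .of_reflect (.of_reverse F.reflect
    (H.reflect.reverse.bandReachable_of_le_peak F.reflect.reverse hb.reflect.reverse
      ha.reflect.reverse ?_ ?_ ?_))
  · simpa using hab
  · rwa [band_reverse, band_reflect]
  · simpa using hbt

/-- If `v` is not reached, then the last reachable point `l` of the upper chain has its step to `m`
discarded in favour of a reachable point `c` of the lower chain, and some step `k, t` of the lower
chain after `c` is blocked as well. The last point `e` of the lower chain before `m` and `t` is
reachable, and no point is left to discard the edge from `e` to `m`. -/
lemma bandReachable_of_peak_lt_trough : BandReachable G N X Y u v := by
  by_contra huv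
  have hua := H.bandReachable_of_le_peak F ha hb hab ha.mem.1 le_rfl
  have hlate : ∀ t ∈ lower X Y u v, X b ≤ X t → ¬ BandReachable G N X Y u t :=
    fun t ht hbt hut ↦
      huv (hut.trans (H.bandReachable_finish_of_trough_le F ha hb hab ht.1 hbt))
  obtain ⟨l, hl, m, hlm, hyml, hum, c, hc, ⟨-, hlc, hcm, -⟩, huc⟩ :=
    H.exists_blocked_upper_step F ha hua huv
  obtain ⟨k, t, hkt, ht, hck, htb, ⟨d, hd, hkd, -, hdt, hdt'⟩, hreach⟩ :=
    H.exists_blocked_lower_step F hb (hlate b hb.mem le_rfl) hc huc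
      (not_le.1 fun hbc ↦ hlate c hc hbc huc)
  have hbefore : ∀ r ∈ upper X Y u v, X r < X m → X r ≤ X l := fun r hr hrm ↦
    hlm.le_of_lt (Set.sep_subset _ _) (fun _ hp _ hq ↦ H.add_lt_iff_of_mem_upper F hp hq) hr hrm
  have hmd : X m ≤ X d := by
    by_contra! hdm
    linarith [hbefore d hd hdm, hc.2.1, hl.2.1]
  have hm : m ∈ upper X Y u v := by
    refine hlm.finish_mem.resolve_left ?_
    rintro rfl
    exact hd.1.2.2.1.not_ge hmd
  obtain ⟨e, ⟨he, hce, het, hem⟩, hmax⟩ := Set.exists_max_image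
    {s | s ∈ lower X Y u v ∧ X c ≤ X s ∧ X s < X t ∧ X s < X m} X (Set.toFinite _)
    ⟨c, hc, le_rfl, hck.trans_lt hkt.x_lt, hcm⟩
  have hle : X l + Y l < X e + Y e :=
    hlc.trans_le ((H.add_le_iff_of_mem_lower F hc he).2 hce)
  refine hum ((hreach e he hce het).trans (.of_adj F
    (H.adj_of_crossing F he hm hem (fun r hr hrm ↦ ?_) ht ?_ ?_ (fun r hr her ↦ ?_) hl hle hyml)
    hem (by linarith [he.2.1, hm.2.1])))
  · exact ((H.add_le_iff_of_mem_upper F hr hl).2 (hbefore r hr hrm)).trans_lt hle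
  · exact ((H.add_le_iff_of_mem_upper F hm hd).2 hmd).trans_lt hdt'
  · exact H.y_lt_of_le_trough F hb he ht het htb
  · by_contra! hrm
    exact her.not_ge (hmax r ⟨hr, (hce.trans_lt her).le, hrm.trans_le (hmd.trans hdt.le), hrm⟩)

end PeakFirst

lemma bandReachable (F : HexFrame G N X Y) (H : Ladder X Y u v) : BandReachable G N X Y u v := by
  obtain ⟨p, hp, -⟩ := H.start_upper
  obtain ⟨q, hq, -⟩ := H.start_lower
  obtain ⟨a, ha, hmax⟩ := Set.exists_max_image (upper X Y u v) Y (Set.toFinite _) ⟨p, hp⟩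
  obtain ⟨b, hb, hmin⟩ := Set.exists_min_image (lower X Y u v) Y (Set.toFinite _) ⟨q, hq⟩
  have ha' : IsPeak X Y u v a := ⟨ha, hmax⟩
  have hb' : IsTrough X Y u v b := ⟨hb, hmin⟩
  rcases lt_or_ge (X a) (X b) with hab | hba
  · exact H.bandReachable_of_peak_lt_trough F ha' hb' hab
  · exact .of_reflect (H.reflect.bandReachable_of_peak_lt_trough F.reflect hb'.reflect ha'.reflect
      (by linarith [ha.2.1, hb.2.1]))

end Ladder

end Ladders

/-! ### Arbitrary pairs -/

section Pairs

variable {P : Type*} {G : SimpleGraph P} {N : P → P → ℝ} {X Y : P → ℝ} {u v p p' q r : P}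

lemma box_mirror (u v : P) : box (fun p ↦ -Y p) (fun p ↦ -X p) v u = box X Y u v := by
  ext t
  simp only [box, Set.mem_ofPred_eq, neg_lt_neg_iff]
  tauto

lemma box_swap (u v : P) : box Y X u v = box X Y u v := by
  ext t
  simp only [box, Set.mem_ofPred_eq]
  tauto

lemma ncard_box_start_lt [Finite P] (hr : r ∈ box X Y u v) :
    (box X Y u r).ncard < (box X Y u v).ncard :=
  Set.ncard_lt_ncard ⟨fun _ ht ↦ ⟨ht.1, ht.2.1, ht.2.2.1.trans hr.2.2.1, ht.2.2.2.trans hr.2.2.2⟩,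
    fun hsub ↦ (hsub hr).2.2.1.false⟩

lemma ncard_box_finish_lt [Finite P] (hr : r ∈ box X Y u v) :
    (box X Y r v).ncard < (box X Y u v).ncard :=
  Set.ncard_lt_ncard ⟨fun _ ht ↦ ⟨hr.1.trans ht.1, hr.2.1.trans ht.2.1, ht.2.2⟩,
    fun hsub ↦ (hsub hr).1.false⟩

namespace HexFrame

variable (F : HexFrame G N X Y)

include F

section EmptyBox

variable (hbox : ∀ t, t ∉ box X Y u v)

include hbox

lemma y_lt_start_of_mem_band (hy : Y u < Y v) (hr : r ∈ band X Y u v) (hrv : Y r < Y v) :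
    Y r < Y u := by
  have hru : r ≠ u := by rintro rfl; exact hr.1.false
  refine (F.injective_y.ne hru).lt_or_gt.resolve_right fun hur ↦ ?_
  exact hbox r ⟨hr.1, hur, hr.2.2.1, hrv⟩

lemma band_subset_upper_union_lower (hy : Y u < Y v) :
    band X Y u v ⊆ upper X Y u v ∪ lower X Y u v := by
  intro t ht
  have htv : t ≠ v := by rintro rfl; exact ht.2.2.1.false
  rcases (F.injective_y.ne htv).lt_or_gt with hlow | hup
  · exact .inr ⟨ht, F.y_lt_start_of_mem_band hbox hy ht hlow, hlow⟩
  · exact .inl ⟨ht, hy.trans hup, hup⟩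

variable [Finite P] (hx : X u < X v) (hy : Y u < Y v) (hyp : Y v < Y p)
  (hzp : X p + Y p < X v + Y v) (hup : IsNearest X Y u p)

include hx hy hyp hzp hup

lemma ladder_of_isRival (hr : IsRival X Y p v r) (hru : Y r < Y u) : Ladder X Y u v := by
  have hxp := hup.x_lt
  obtain ⟨hxr, -, hzr⟩ := hr
  refine ⟨hx, by linarith, F.band_subset_upper_union_lower hbox hy,
    ⟨p, ⟨⟨hxp, by linarith, by linarith, hzp⟩, by linarith, hyp⟩, hup⟩, ?_, ?_, ?_⟩
  · obtain ⟨m, hm⟩ := exists_isNearest (X := fun p ↦ X p + Y p) (Y := fun p ↦ -Y p) (u := u)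
      (v := r) (by linarith) (by linarith)
    have hmr := hm.add_le r (by linarith) (by linarith)
    have hmz := hm.x_lt
    have hmy := hm.y_lt
    exact ⟨m, ⟨⟨by linarith, hmz, by linarith, by linarith⟩, by linarith, by linarith⟩, hm⟩
  · obtain ⟨m, hm⟩ := exists_isNearest (X := fun p ↦ -(X p + Y p)) (Y := Y) (u := v) (v := p)
      (by linarith) hyp
    have hmp := hm.add_le p (by linarith) hyp
    have hmz := hm.x_lt
    have hmy := hm.y_lt
    exact ⟨m, ⟨⟨by linarith, by linarith, by linarith, by linarith⟩, by linarith, hmy⟩, hm⟩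
  · obtain ⟨m, hm⟩ := exists_isNearest (X := fun p ↦ -X p) (Y := fun p ↦ -Y p) (u := v) (v := r)
      (by linarith) (by linarith)
    have hmr := hm.add_le r (by linarith) (by linarith)
    have hmx := hm.x_lt
    have hmy := hm.y_lt
    have hband : m ∈ band X Y u v := ⟨by linarith, by linarith, by linarith, by linarith⟩
    exact ⟨m, ⟨hband, F.y_lt_start_of_mem_band hbox hy hband (by linarith), by linarith⟩, hm⟩

lemma reachableWithin_of_sixth_cone (hyq : Y q < Y u) (hzq : X u + Y u < X q + Y q) :
    ReachableWithin G N u v (6 * (X v + Y v - (X u + Y u))) := by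
  by_cases hclear : ∀ t, IsRival X Y p v t → Y u ≤ Y t
  · exact F.reachableWithin_of_no_nearer_rival_below hx hy hbox hyp hzp hup hyq hzq hclear
  push Not at hclear
  obtain ⟨r, hr, hru⟩ := hclear
  exact ((F.ladder_of_isRival hbox hx hy hyp hzp hup hr hru).bandReachable F).mono (by linarith)

lemma reachableWithin_of_nearest_above (hvp' : IsNearest (fun p ↦ -X p) (fun p ↦ -Y p) v p')
    (hzp' : X u + Y u < X p' + Y p') :
    ReachableWithin G N u v (6 * (X v + Y v - (X u + Y u))) := by
  by_cases hbelow : ∀ t, IsRival X Y u v t → Y u ≤ Y t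
  swap
  · push Not at hbelow
    obtain ⟨q, hq, hqu⟩ := hbelow
    exact F.reachableWithin_of_sixth_cone hbox hx hy hyp hzp hup hqu hq.add_lt
  have hxp' := neg_lt_neg_iff.1 hvp'.x_lt
  have hyp' := neg_lt_neg_iff.1 hvp'.y_lt
  have hp'u : X p' < X u := by
    by_contra! hup'
    have hne : u ≠ p' := by rintro rfl; exact hzp'.false
    have hxup' := hup'.lt_of_ne (F.injective_x.ne hne)
    have hyup' := (hbelow p' ⟨hxp', hyp', hzp'⟩).lt_of_ne (F.injective_y.ne hne)
    exact hbox p' ⟨hxup', hyup', hxp', hyp'⟩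
  simp only [← box_mirror (X := X)] at hbox
  by_cases habove : ∀ t, IsRival (fun p ↦ -Y p) (fun p ↦ -X p) v u t → -X v ≤ -X t
  swap
  · push Not at habove
    obtain ⟨q, hq, hqv⟩ := habove
    have hzq := hq.add_lt
    exact (F.reachableWithin_symm (F.mirror.reachableWithin_of_sixth_cone hbox (neg_lt_neg hy)
      (neg_lt_neg hx) (neg_lt_neg hp'u) (by linarith) hvp'.swap hqv (by linarith))).mono
      (by linarith)
  rcases le_total (X v - X u) (Y v - Y u) with hle | hle
  · simp only [box_mirror] at hbox
    exact (F.reachableWithin_of_no_rival_below hx hy hbox hyp hzp hup hbelow).mono (by linarith)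
  · exact (F.reachableWithin_symm (F.mirror.reachableWithin_of_no_rival_below (neg_lt_neg hy)
      (neg_lt_neg hx) hbox (neg_lt_neg hp'u) (by linarith) hvp'.swap habove)).mono (by linarith)

end EmptyBox

lemma reachableWithin_of_box_empty [Finite P] (hbox : ∀ t, t ∉ box X Y u v) (hx : X u < X v)
    (hy : Y u < Y v) :
    ReachableWithin G N u v (6 * (X v + Y v - (X u + Y u))) := by
  obtain ⟨p, hp⟩ := exists_isNearest hx hy
  obtain ⟨p', hp'⟩ := exists_isNearest (X := fun p ↦ -X p) (Y := fun p ↦ -Y p)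
    (neg_lt_neg hx) (neg_lt_neg hy)
  have hzp := hp.add_le v hx hy
  have hzp' := hp'.add_le u (neg_lt_neg hx) (neg_lt_neg hy)
  rcases eq_or_ne p v with rfl | hpv
  · exact (hp.reachableWithin F).mono (by linarith)
  rcases eq_or_ne u p' with rfl | hup'
  · exact (F.reachableWithin_symm (hp'.reachableWithin F.rotate_half)).mono (by linarith)
  have hzp : X p + Y p < X v + Y v := hzp.lt_of_ne (F.injective_add.ne hpv)
  have hzp' : X u + Y u < X p' + Y p' :=
    lt_of_le_of_ne (by linarith) (F.injective_add.ne hup')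
  rcases (F.injective_y.ne hpv).lt_or_gt with hpy | hpy
  · have hpx : X v < X p := (F.injective_x.ne hpv).lt_or_gt.resolve_left fun hlt ↦
      hbox p ⟨hp.x_lt, hp.y_lt, hlt, hpy⟩
    exact (F.swap.reachableWithin_of_nearest_above (by simpa only [box_swap] using hbox) hy hx hpx
      (by linarith) hp.swap hp'.swap (by linarith)).mono (by linarith)
  · exact F.reachableWithin_of_nearest_above hbox hx hy hpy hzp hp hp' hzp'

lemma reachableWithin_of_lt [Finite P] (hx : X u < X v) (hy : Y u < Y v) :
    ReachableWithin G N u v (6 * (X v + Y v - (X u + Y u))) := by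
  induction hn : (box X Y u v).ncard using Nat.strong_induction_on generalizing u v with
  | _ n ih =>
    by_cases hbox : ∀ t, t ∉ box X Y u v
    · exact F.reachableWithin_of_box_empty hbox hx hy
    · push Not at hbox
      obtain ⟨r, hr⟩ := hbox
      have hur := ih _ (hn ▸ ncard_box_start_lt hr) hr.1 hr.2.1 rfl
      have hrv := ih _ (hn ▸ ncard_box_finish_lt hr) hr.2.2.1 hr.2.2.2 rfl
      exact (hur.trans hrv).mono (by linarith)

lemma reachableWithin [Finite P] (u v : P) : ReachableWithin G N u v (6 * N u v) := by
  have hcone : ∀ {X Y : P → ℝ}, HexFrame G N X Y → X u < X v → Y u < Y v →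
      ReachableWithin G N u v (6 * N u v) := fun F hx hy ↦ by
    rw [F.dist_eq_of_lt hx hy]
    exact F.reachableWithin_of_lt hx hy
  rcases eq_or_ne u v with rfl | huv
  · exact (ReachableWithin.refl u).mono (by simp [F.dist_eq])
  rcases (F.injective_x.ne huv).lt_or_gt with hx | hx <;>
    rcases (F.injective_y.ne huv).lt_or_gt with hy | hy <;>
    rcases (F.injective_add.ne huv).lt_or_gt with hz | hz
  · exact hcone F hx hy
  · linarith
  · exact hcone F.rotate_inv (neg_lt_neg hy) hz
  · exact hcone F.rotate.rotate_half (neg_lt_neg hz) (by linarith)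
  · exact hcone F.rotate hz (neg_lt_neg hx)
  · exact hcone F.rotate_inv.rotate_half (by linarith) (neg_lt_neg hz)
  · linarith
  · exact hcone F.rotate_half (neg_lt_neg hx) (neg_lt_neg hy)

end HexFrame

end Pairs

/-! ### Cone coordinates in the plane -/

section ConeCoordinates

lemma argIn_nonneg (z : ℂ) : 0 ≤ argIn z := by
  unfold argIn
  split_ifs with h
  · exact h
  · linarith [Complex.neg_pi_lt_arg z, Real.pi_pos]

lemma argIn_lt_two_pi (z : ℂ) : argIn z < 2 * π := by
  unfold argIn
  split_ifs with h
  · linarith [Complex.arg_le_pi z, Real.pi_pos]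
  · linarith

lemma norm_mul_cos_argIn (z : ℂ) : ‖z‖ * cos (argIn z) = z.re := by
  unfold argIn
  split_ifs with h <;> simp

lemma norm_mul_sin_argIn (z : ℂ) : ‖z‖ * sin (argIn z) = z.im := by
  unfold argIn
  split_ifs with h <;> simp

/-- The signed distance from `z` to the line through `0` in direction `kπ/3`, positive to the left
of that ray and scaled so that the unit vectors along the two adjacent rays have coordinates `1`
and `-1`. -/
def rayCoord (k : ℕ) : ℂ →ₗ[ℝ] ℝ :=
  (2 / √3) • (cos (k * (π / 3)) • Complex.imLm - sin (k * (π / 3)) • Complex.reLm)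

lemma rayCoord_eq (k : ℕ) (z : ℂ) :
    rayCoord k z = 2 / √3 * ‖z‖ * sin (argIn z - k * (π / 3)) := by
  rw [sin_sub, mul_assoc, mul_sub, ← mul_assoc ‖z‖, ← mul_assoc ‖z‖, norm_mul_cos_argIn,
    norm_mul_sin_argIn]
  simp [rayCoord, mul_comm]

lemma rayCoord_add_two (k : ℕ) (z : ℂ) :
    rayCoord (k + 2) z = rayCoord (k + 1) z - rayCoord k z := by
  have hsin (b : ℝ) : sin (b - 2 * (π / 3)) = sin (b - π / 3) - sin b := by
    rw [sin_sub, sin_sub, sin_two_mul, cos_two_mul, sin_pi_div_three, cos_pi_div_three]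
    ring
  have htwo : argIn z - (k + 2 : ℕ) * (π / 3) = argIn z - k * (π / 3) - 2 * (π / 3) := by
    push_cast; ring
  have hone : argIn z - (k + 1 : ℕ) * (π / 3) = argIn z - k * (π / 3) - π / 3 := by
    push_cast; ring
  rw [rayCoord_eq, rayCoord_eq, rayCoord_eq, htwo, hone, hsin]
  ring

lemma rayCoord_add_three (k : ℕ) (z : ℂ) : rayCoord (k + 3) z = -rayCoord k z := by
  rw [rayCoord_add_two, rayCoord_add_two]
  ring

lemma rayCoord_periodic : Function.Periodic rayCoord 6 := fun k ↦ by
  refine LinearMap.ext fun z ↦ ?_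
  rw [show k + 6 = k + 3 + 3 from rfl, rayCoord_add_three, rayCoord_add_three, neg_neg]

lemma rayCoord_mod_six (k : ℕ) : rayCoord (k % 6) = rayCoord k :=
  rayCoord_periodic.map_mod_nat k

lemma rayCoord_mod_six_add_one (k : ℕ) : rayCoord (k % 6 + 1) = rayCoord (k + 1) := by
  rw [← rayCoord_mod_six (k % 6 + 1), Nat.mod_add_mod, rayCoord_mod_six]

lemma rayCoord_zero_apply (z : ℂ) : rayCoord 0 z = 2 / √3 * z.im := by
  simp [rayCoord]

lemma rayCoord_one_apply (z : ℂ) : rayCoord 1 z = z.im / √3 - z.re := by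
  have h3 : √3 ≠ 0 := by positivity
  simp [rayCoord]
  field_simp

lemma eq_of_rayCoord_eq {a b : ℂ} (hzero : rayCoord 0 a = rayCoord 0 b)
    (hone : rayCoord 1 a = rayCoord 1 b) : a = b := by
  have h3 : 2 / √3 ≠ 0 := by positivity
  have him : a.im = b.im := by
    rwa [rayCoord_zero_apply, rayCoord_zero_apply, mul_right_inj' h3] at hzero
  refine Complex.ext ?_ him
  rw [rayCoord_one_apply, rayCoord_one_apply, him] at hone
  linarith

end ConeCoordinates

/-! ### The hexagonal norm -/

section HexNorm

/-- The norm on the plane whose unit ball is the regular hexagon with vertices `e^{ijπ/3}`. -/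
def hexNorm (z : ℂ) : ℝ := max |rayCoord 0 z| (max |rayCoord 1 z| |rayCoord 2 z|)

lemma sq_norm_eq_rayCoord (z : ℂ) :
    ‖z‖ ^ 2 = rayCoord 0 z ^ 2 - rayCoord 0 z * rayCoord 1 z + rayCoord 1 z ^ 2 := by
  have hsq : √3 ^ 2 = 3 := Real.sq_sqrt (by norm_num)
  rw [rayCoord_zero_apply, rayCoord_one_apply, Complex.sq_norm, Complex.normSq_apply]
  field_simp
  ring_nf
  rw [hsq]

lemma norm_le_hexNorm (z : ℂ) : ‖z‖ ≤ hexNorm z := by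
  suffices h : ‖z‖ ≤ |rayCoord 0 z| ∨ ‖z‖ ≤ |rayCoord 1 z| ∨ ‖z‖ ≤ |rayCoord 2 z| by
    simpa [hexNorm] using h
  have hnorm := sq_norm_eq_rayCoord z
  have habs (x : ℝ) (h : ‖z‖ ^ 2 ≤ x ^ 2) : ‖z‖ ≤ |x| := by
    simpa using sq_le_sq.1 h
  have htwo : rayCoord 2 z = rayCoord 1 z - rayCoord 0 z := rayCoord_add_two 0 z
  -- With `x, y, w` the three coordinates, `‖z‖² = x² + y w = y² - x w = w² + x y`, and the three
  -- correction terms cannot all be positive.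
  rcases le_or_gt (rayCoord 1 z * rayCoord 2 z) 0 with h | h₀
  · exact .inl (habs _ (by rw [htwo] at h; linarith))
  rcases le_or_gt 0 (rayCoord 0 z * rayCoord 2 z) with h | h₁
  · exact .inr (.inl (habs _ (by rw [htwo] at h; linarith)))
  refine .inr (.inr (habs _ ?_))
  have h₂ : rayCoord 0 z * rayCoord 1 z ≤ 0 := by
    nlinarith [mul_neg_of_pos_of_neg h₀ h₁, sq_nonneg (rayCoord 2 z)]
  rw [htwo]
  linarith

lemma hexNorm_le (z : ℂ) : hexNorm z ≤ 2 / √3 * ‖z‖ := by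
  have hcoord (k : ℕ) : |rayCoord k z| ≤ 2 / √3 * ‖z‖ := by
    rw [rayCoord_eq, abs_mul, abs_of_nonneg (by positivity : 0 ≤ 2 / √3 * ‖z‖)]
    exact mul_le_of_le_one_right (by positivity) (abs_sin_le_one _)
  exact max_le (hcoord 0) (max_le (hcoord 1) (hcoord 2))

end HexNorm

/-! ### Cones and projective distances -/

section Cones

variable {S : Finset ℂ} {u v : ℂ} {k : ℕ}

lemma coneIdx_eq_add_one_iff :
    coneIdx u v = k + 1 ↔ k * (π / 3) ≤ argIn (v - u) ∧ argIn (v - u) < (k + 1) * (π / 3) := by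
  have hpi : 0 < π / 3 := by positivity
  have hnonneg : 0 ≤ argIn (v - u) / (π / 3) := div_nonneg (argIn_nonneg _) hpi.le
  have hfloor : coneIdx u v = ⌊argIn (v - u) / (π / 3)⌋₊ + 1 := rfl
  rw [hfloor, Nat.add_right_cancel_iff, Nat.floor_eq_iff hnonneg, le_div_iff₀ hpi,
    div_lt_iff₀ hpi]

lemma mem_cone_add_one_iff {p : ℂ} : p ∈ cone (k + 1) u ↔ p ≠ u ∧ coneIdx u p = k + 1 := by
  rw [coneIdx_eq_add_one_iff]
  simp [cone]

lemma projDist_eq (h : coneIdx u v = k % 6 + 1) :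
    projDist u v = √3 / 2 * (rayCoord k (v - u) - rayCoord (k + 1) (v - u)) := by
  rw [← rayCoord_mod_six k, ← rayCoord_mod_six_add_one k]
  generalize k % 6 = m at h
  generalize hz : v - u = z
  have hbis : bisAngle u v = m * (π / 3) + π / 6 := by
    simp [bisAngle, h]
  have hexp (b : ℝ) : Complex.exp (-(Complex.I * b)) = ⟨cos b, -sin b⟩ := by
    apply Complex.ext <;> simp [Complex.exp_re, Complex.exp_im]
  have hsum (b : ℝ) : sin b - sin (b - π / 3) = cos (b - π / 6) := by
    rw [sin_sub, cos_sub, sin_pi_div_three, cos_pi_div_three, sin_pi_div_six, cos_pi_div_six]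
    ring
  have hsucc : argIn z - (m + 1 : ℕ) * (π / 3) = argIn z - m * (π / 3) - π / 3 := by
    push_cast; ring
  calc projDist u v
      = ‖z‖ * cos (argIn z - m * (π / 3) - π / 6) := by
        rw [projDist, hbis, hexp, hz, sub_sub, cos_sub, Complex.mul_re, ← norm_mul_cos_argIn,
          ← norm_mul_sin_argIn]
        ring
    _ = √3 / 2 * (rayCoord m z - rayCoord (m + 1) z) := by
        rw [rayCoord_eq, rayCoord_eq, hsucc, ← hsum]
        field_simp

lemma mem_Ioo_of_sin_pos_of_sin_sub_neg {b : ℝ} (hlower : -(5 * (π / 3)) ≤ b) (hupper : b < 2 * π)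
    (hpos : 0 < sin b) (hneg : sin (b - π / 3) < 0) : b ∈ Set.Ioo 0 (π / 3) := by
  have hpi := Real.pi_pos
  constructor <;> by_contra! hb
  · rcases le_or_gt (-π) b with hb' | hb'
    · exact hpos.not_ge (sin_nonpos_of_nonpos_of_neg_pi_le hb hb')
    · rw [← sin_add_two_pi] at hneg
      exact hneg.not_ge (sin_nonneg_of_nonneg_of_le_pi (by linarith) (by linarith))
  · rcases le_or_gt b (4 * (π / 3)) with hb' | hb'
    · exact hneg.not_ge (sin_nonneg_of_nonneg_of_le_pi (by linarith) (by linarith))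
    · rw [← sin_sub_two_pi] at hpos
      exact hpos.not_ge (sin_nonpos_of_nonpos_of_neg_pi_le (by linarith) (by linarith))

lemma coneIdx_eq_of_rayCoord (hpos : 0 < rayCoord k (v - u))
    (hneg : rayCoord (k + 1) (v - u) < 0) : coneIdx u v = k % 6 + 1 := by
  rw [← rayCoord_mod_six, rayCoord_eq] at hpos
  rw [← rayCoord_mod_six_add_one, rayCoord_eq] at hneg
  have hm : ((k % 6 : ℕ) : ℝ) ≤ 5 := by
    exact_mod_cast Nat.le_of_lt_succ (Nat.mod_lt k (by simp))
  have hscale : 0 ≤ 2 / √3 * ‖v - u‖ := by positivity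
  have hsin_neg := neg_of_mul_neg_right hneg hscale
  rw [show argIn (v - u) - (k % 6 + 1 : ℕ) * (π / 3) =
    argIn (v - u) - (k % 6 : ℕ) * (π / 3) - π / 3 by push_cast; ring] at hsin_neg
  have hangle := mem_Ioo_of_sin_pos_of_sin_sub_neg
    (by nlinarith [argIn_nonneg (v - u), Real.pi_pos])
    (by nlinarith [argIn_lt_two_pi (v - u), Real.pi_pos, (k % 6).cast_nonneg (α := ℝ)])
    (pos_of_mul_pos_right hpos hscale) hsin_neg
  rw [coneIdx_eq_add_one_iff]
  constructor <;> linarith [hangle.1, hangle.2]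

namespace GenPos

lemma rayCoord_ne_zero (hS : GenPos S) (hu : u ∈ S) (hv : v ∈ S) (huv : u ≠ v) (k : ℕ) :
    rayCoord k (v - u) ≠ 0 := by
  intro h
  have hscale : 2 / √3 * ‖v - u‖ ≠ 0 :=
    mul_ne_zero (by positivity) (norm_ne_zero_iff.2 (sub_ne_zero.2 huv.symm))
  rw [rayCoord_eq] at h
  obtain ⟨n, hn⟩ := sin_eq_zero_iff.1 ((mul_eq_zero.1 h).resolve_left hscale)
  have harg : argIn (v - u) = ((k + 3 * n : ℤ) : ℝ) * (π / 3) := by push_cast; linarith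
  have hnonneg : 0 ≤ (k + 3 * n : ℤ) := by
    have := nonneg_of_mul_nonneg_left (harg ▸ argIn_nonneg (v - u)) (by positivity : 0 < π / 3)
    exact_mod_cast this
  obtain ⟨j, hj⟩ := Int.eq_ofNat_of_zero_le hnonneg
  exact hS u hu v hv huv j (by rw [harg, hj]; simp)

lemma coneIdx_eq_iff (hS : GenPos S) (hu : u ∈ S) (hv : v ∈ S) (huv : u ≠ v) :
    coneIdx u v = k % 6 + 1 ↔ 0 < rayCoord k (v - u) ∧ rayCoord (k + 1) (v - u) < 0 := by
  refine ⟨fun h ↦ ?_, fun h ↦ coneIdx_eq_of_rayCoord h.1 h.2⟩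
  have hpi := Real.pi_pos
  have hne := hS.rayCoord_ne_zero hu hv huv
  obtain ⟨hlower, hupper⟩ := coneIdx_eq_add_one_iff.1 h
  rw [← rayCoord_mod_six k, ← rayCoord_mod_six_add_one k]
  constructor
  · refine lt_of_le_of_ne ?_ (hne _).symm
    rw [rayCoord_eq]
    exact mul_nonneg (by positivity)
      (sin_nonneg_of_nonneg_of_le_pi (by linarith) (by linarith))
  · refine lt_of_le_of_ne ?_ (hne _)
    rw [rayCoord_eq]
    push_cast
    exact mul_nonpos_of_nonneg_of_nonpos (by positivity)
      (sin_nonpos_of_nonpos_of_neg_pi_le (by linarith) (by linarith))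

lemma coneIdx_opposite_iff (hS : GenPos S) (hu : u ∈ S) (hv : v ∈ S) (huv : u ≠ v) :
    coneIdx v u = (k + 3) % 6 + 1 ↔ coneIdx u v = k % 6 + 1 := by
  rw [hS.coneIdx_eq_iff hv hu huv.symm, hS.coneIdx_eq_iff hu hv huv, ← neg_sub v u,
    show k + 3 + 1 = k + 1 + 3 from rfl, rayCoord_add_three, rayCoord_add_three]
  simp

end GenPos

end Cones

/-! ### The graph `ΘΘ₆` as a hexagonal frame -/

section ThetaThetaGraph

variable {S : Finset ℂ} {k : ℕ}

/-- `ΘΘ₆(S)` as a simple graph on the points of `S`. -/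
def thetaThetaGraph (S : Finset ℂ) : SimpleGraph S where
  Adj u v := TTAdj S u v
  symm := ⟨fun _ _ h ↦ Or.symm h⟩
  loopless := ⟨fun _ h ↦ h.elim (fun h ↦ h.1.2.2.1 rfl) fun h ↦ h.1.2.2.1 rfl⟩

/-- The coordinate along the clockwise bounding ray of the cone with angles
`[kπ/3, (k + 1)π/3)`. -/
def coneX (S : Finset ℂ) (k : ℕ) (p : S) : ℝ := -rayCoord (k + 1) p

/-- The coordinate along the counterclockwise bounding ray of the cone with angles
`[kπ/3, (k + 1)π/3)`. -/
def coneY (S : Finset ℂ) (k : ℕ) (p : S) : ℝ := rayCoord k p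

lemma iterate_rotateFrame_cone (k : ℕ) :
    rotateFrame^[k] (coneX S 0, coneY S 0) = (coneX S k, coneY S k) := by
  induction k with
  | zero => rfl
  | succ k ih =>
    rw [Function.iterate_succ_apply', ih]
    ext p
    · simp only [rotateFrame, coneX, coneY, rayCoord_add_two]
      ring
    · simp [rotateFrame, coneX, coneY]

lemma ThetaEdge.thetaThetaEdge_or_exists {u v : ℂ} (huv : ThetaEdge S u v) :
    ThetaThetaEdge S u v ∨
      ∃ w, ThetaThetaEdge S w v ∧ coneIdx v w = coneIdx v u ∧ projDist w v < projDist u v := by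
  obtain ⟨w, ⟨hw, hwu⟩, hmin⟩ := Set.exists_min_image
    {w | ThetaEdge S w v ∧ coneIdx v w = coneIdx v u} (fun w ↦ projDist w v)
    (S.finite_toSet.subset fun w hw ↦ hw.1.1) ⟨u, huv, rfl⟩
  rcases (hmin u ⟨huv, rfl⟩).lt_or_eq with hlt | heq
  · exact .inr ⟨w, ⟨hw, fun t ht htw ↦ hmin t ⟨ht, htw.trans hwu⟩⟩, hwu, hlt⟩
  · exact .inl ⟨huv, fun t ht htu ↦ heq ▸ hmin t ⟨ht, htu⟩⟩

lemma projDist_eq_cone {u v : S} (h : coneIdx u v = k % 6 + 1) :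
    projDist u v = √3 / 2 * (coneX S k v + coneY S k v - (coneX S k u + coneY S k u)) := by
  rw [projDist_eq h]
  simp only [coneX, coneY, map_sub]
  ring

namespace GenPos

lemma coneIdx_eq_iff_lt (hS : GenPos S) {u v : S} (huv : u ≠ v) :
    coneIdx u v = k % 6 + 1 ↔ coneX S k u < coneX S k v ∧ coneY S k u < coneY S k v := by
  rw [hS.coneIdx_eq_iff u.2 v.2 (Subtype.coe_ne_coe.2 huv), map_sub, map_sub, sub_pos, sub_neg,
    and_comm]
  simp [coneX, coneY]

lemma thetaEdge_of_isNearest (hS : GenPos S) {u v : S} (h : IsNearest (coneX S k) (coneY S k) u v) :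
    ThetaEdge S u v := by
  have huv : u ≠ v := fun huv ↦ (huv ▸ h.x_lt).false
  have hidx := (hS.coneIdx_eq_iff_lt huv).2 ⟨h.x_lt, h.y_lt⟩
  refine ⟨u.2, v.2, Subtype.coe_ne_coe.2 huv.symm, fun w hw hwu ↦ ?_⟩
  lift w to S using hw
  rw [hidx, mem_cone_add_one_iff] at hwu
  obtain ⟨hx, hy⟩ := (hS.coneIdx_eq_iff_lt (Subtype.coe_ne_coe.1 hwu.1).symm).1 hwu.2
  rw [projDist_eq_cone hidx, projDist_eq_cone hwu.2]
  exact mul_le_mul_of_nonneg_left (sub_le_sub_right (h.add_le w hx hy) _) (by positivity)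

lemma discardRule (hS : GenPos S) (k : ℕ) :
    DiscardRule (thetaThetaGraph S) (coneX S k) (coneY S k) := by
  intro u v h
  have huv : u ≠ v := fun huv ↦ (huv ▸ h.x_lt).false
  have hidx := (hS.coneIdx_eq_iff_lt huv).2 ⟨h.x_lt, h.y_lt⟩
  rcases (hS.thetaEdge_of_isNearest h).thetaThetaEdge_or_exists with hedge | ⟨w, hedge, hw, hlt⟩
  · exact .inl (.inl hedge)
  lift w to S using hedge.1.1
  have hwv : w ≠ v := Subtype.coe_ne_coe.1 hedge.1.2.2.1.symm
  have hwidx : coneIdx w v = k % 6 + 1 := by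
    rwa [← hS.coneIdx_opposite_iff w.2 v.2 (Subtype.coe_ne_coe.2 hwv), hw,
      hS.coneIdx_opposite_iff u.2 v.2 (Subtype.coe_ne_coe.2 huv)]
  obtain ⟨hx, hy⟩ := (hS.coneIdx_eq_iff_lt hwv).1 hwidx
  rw [projDist_eq_cone hwidx, projDist_eq_cone hidx] at hlt
  refine .inr ⟨w, ⟨hx, hy, ?_⟩, .inl hedge⟩
  linarith [lt_of_mul_lt_mul_left hlt (by positivity)]

lemma rayCoord_injective (hS : GenPos S) (k : ℕ) :
    Function.Injective fun p : S ↦ rayCoord k p := by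
  intro u v h
  by_contra huv
  exact hS.rayCoord_ne_zero u.2 v.2 (Subtype.coe_ne_coe.2 huv) k
    (by rw [map_sub, sub_eq_zero]; exact h.symm)

end GenPos

lemma add_smul_mem_convexHull_triple {E : Type*} [AddCommGroup E] [Module ℝ E] {a b c : E}
    {p q r : ℝ} (hp : 0 ≤ p) (hq : 0 ≤ q) (hr : 0 ≤ r) (hsum : p + q + r = 1) :
    p • a + q • b + r • c ∈ convexHull ℝ {a, b, c} := by
  have hsubset := subset_convexHull ℝ {a, b, c}
  have hmem := (convex_convexHull ℝ {a, b, c}).sum_mem (t := Finset.univ) (w := ![p, q, r])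
    (z := ![a, b, c])
    (by simp [Fin.forall_fin_succ, hp, hq, hr])
    (by simpa [Fin.sum_univ_three] using hsum)
    (fun i _ ↦ hsubset (by fin_cases i <;> simp))
  simpa [Fin.sum_univ_three] using hmem

namespace ConvexPos

lemma convexIndependent (hS : ConvexPos S) : ConvexIndependent ℝ ((↑) : S → ℂ) :=
  (convex_convexHull ℝ (S : Set ℂ)).convexIndependent_extremePoints.mono hS

lemma not_wbtw (hS : ConvexPos S) {a b c : S} (hab : a ≠ b) (hbc : b ≠ c) :
    ¬ Wbtw ℝ (a : ℂ) b c := by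
  intro h
  have hmem : (b : ℂ) ∈ convexHull ℝ ((↑) '' ({a, c} : Set S)) := by
    rw [Set.image_pair, convexHull_pair]
    exact h.mem_segment
  simpa [hab.symm, hbc] using hS.convexIndependent _ _ hmem

lemma orient_ne_zero (hS : ConvexPos S) (hgen : GenPos S) {a b c : S} (hab : a ≠ b) (hbc : b ≠ c)
    (hac : a ≠ c) : orient (coneX S 0) (coneY S 0) a b c ≠ 0 := by
  intro h
  have hne : rayCoord 0 (b : ℂ) - rayCoord 0 (a : ℂ) ≠ 0 :=
    sub_ne_zero.2 ((hgen.rayCoord_injective 0).ne hab.symm)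
  simp only [orient, coneX, coneY] at h
  have hline : (c : ℂ) = AffineMap.lineMap (a : ℂ) (b : ℂ)
      ((rayCoord 0 (c : ℂ) - rayCoord 0 (a : ℂ)) / (rayCoord 0 (b : ℂ) - rayCoord 0 (a : ℂ))) := by
    rw [AffineMap.lineMap_apply_module']
    apply eq_of_rayCoord_eq
    · simp only [map_add, map_smul, map_sub, smul_eq_mul]
      field_simp
      ring
    · simp only [map_add, map_smul, map_sub, smul_eq_mul]
      field_simp
      linarith
  have hcol : Collinear ℝ {(c : ℂ), (a : ℂ), (b : ℂ)} :=
    collinear_insert_of_mem_affineSpan_pair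
      (by rw [hline]; exact AffineMap.lineMap_mem_affineSpan_pair _ _ _)
  rcases hcol.wbtw_or_wbtw_or_wbtw with hbtw | hbtw | hbtw
  · exact hS.not_wbtw hac.symm hab hbtw
  · exact hS.not_wbtw hab hbc hbtw
  · exact hS.not_wbtw hbc hac.symm hbtw

lemma notMem_convexHull_triple (hS : ConvexPos S) {a b c d : S} (had : a ≠ d) (hbd : b ≠ d)
    (hcd : c ≠ d) : (d : ℂ) ∉ convexHull ℝ {(a : ℂ), (b : ℂ), (c : ℂ)} := by
  intro h
  have hmem : (d : ℂ) ∈ convexHull ℝ ((↑) '' ({a, b, c} : Set S)) := by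
    simpa only [Set.image_insert_eq, Set.image_singleton] using h
  simpa [had.symm, hbd.symm, hcd.symm] using hS.convexIndependent _ _ hmem

lemma not_mem_triangle (hS : ConvexPos S) {a b c d : S}
    (hab : 0 < orient (coneX S 0) (coneY S 0) a b d)
    (hbc : 0 < orient (coneX S 0) (coneY S 0) b c d) :
    ¬ 0 < orient (coneX S 0) (coneY S 0) c a d := by
  intro hca
  have had : a ≠ d := by rintro rfl; simp at hab
  have hbd : b ≠ d := by rintro rfl; simp at hab
  have hcd : c ≠ d := by rintro rfl; simp at hca
  refine hS.notMem_convexHull_triple had hbd hcd ?_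
  -- The barycentric coordinates of `d` are proportional to the areas of the triangles `bcd`,
  -- `cad` and `abd`.
  set α := orient (coneX S 0) (coneY S 0) b c d with hα
  set β := orient (coneX S 0) (coneY S 0) c a d with hβ
  set γ := orient (coneX S 0) (coneY S 0) a b d with hγ
  have hbary : (d : ℂ) = (α / (α + β + γ)) • (a : ℂ) + (β / (α + β + γ)) • (b : ℂ) +
      (γ / (α + β + γ)) • (c : ℂ) := by
    apply eq_of_rayCoord_eq <;>
    · simp only [map_add, map_smul, smul_eq_mul]
      field_simp
      simp only [hα, hβ, hγ, orient, coneX, coneY]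
      ring
  rw [hbary]
  exact add_smul_mem_convexHull_triple (by positivity) (by positivity) (by positivity)
    (by field_simp)

end ConvexPos

lemma hexFrame (hconv : ConvexPos S) (hgen : GenPos S) :
    HexFrame (thetaThetaGraph S) (fun u v ↦ hexNorm (v - u)) (coneX S 0) (coneY S 0) where
  injective_x := neg_injective.comp (hgen.rayCoord_injective 1)
  injective_y := hgen.rayCoord_injective 0
  injective_add := by
    have hadd : (fun p ↦ coneX S 0 p + coneY S 0 p) = fun p : S ↦ -rayCoord 2 p := by
      ext p
      simp only [coneX, coneY, rayCoord_add_two 0]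
      ring
    rw [hadd]
    exact neg_injective.comp (hgen.rayCoord_injective 2)
  orient_ne_zero _ _ _ := hconv.orient_ne_zero hgen
  not_mem_triangle _ _ _ _ := hconv.not_mem_triangle
  dist_eq a b := by
    rw [hexNorm, max_left_comm, ← abs_neg (rayCoord 1 _), ← abs_neg (rayCoord 2 _),
      rayCoord_add_two 0]
    simp only [map_sub, coneX, coneY]
    ring_nf
  discardRule k := by
    rw [iterate_rotateFrame_cone]
    exact hgen.discardRule k

end ThetaThetaGraph

/-! ### Walks as polygonal paths -/

section PolygonalPaths

variable {S : Finset ℂ} {u v : S}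

lemma isPath_map_support (p : (thetaThetaGraph S).Walk u v) :
    IsPath (TTAdj S) u v (p.support.map (↑)) := by
  refine ⟨(List.isChain_map _).2 p.isChain_adj_support, ?_, ?_⟩
  · rw [List.head?_map, List.head?_eq_some_head p.support_ne_nil, p.head_support, Option.map_some]
  · rw [List.getLast?_map, List.getLast?_eq_some_getLast p.support_ne_nil, p.getLast_support,
      Option.map_some]

lemma pathLength_map_support_le (p : (thetaThetaGraph S).Walk u v) :
    pathLength (p.support.map (↑)) ≤ walkLength (fun a b : S ↦ hexNorm (b - a)) p := by
  induction p with
  | nil => simp [pathLength, walkLength]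
  | @cons u w v h p ih =>
    have hdist : dist (u : ℂ) w ≤ hexNorm (w - u) := by
      rw [dist_comm, dist_eq_norm]
      exact norm_le_hexNorm _
    have hsupport := p.cons_tail_support
    generalize p.support.tail = l at hsupport
    rw [← hsupport] at ih
    simpa [pathLength, walkLength, ← hsupport] using add_le_add hdist ih

end PolygonalPaths

theorem thetaTheta6_convex_eight_spanner_general (S : Finset ℂ) (hconv : ConvexPos S)
    (hgen : GenPos S) :
    ∀ u ∈ S, ∀ v ∈ S,
      ∃ p : List ℂ, IsPath (TTAdj S) u v p ∧ pathLength p ≤ 4 * √3 * dist u v := by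
  intro u hu v hv
  obtain ⟨p, hp⟩ := (hexFrame hconv hgen).reachableWithin ⟨u, hu⟩ ⟨v, hv⟩
  refine ⟨p.support.map (↑), isPath_map_support p, ?_⟩
  calc pathLength (p.support.map (↑))
      ≤ 6 * hexNorm (v - u) := (pathLength_map_support_le p).trans hp
    _ ≤ 6 * (2 / √3 * dist u v) := by
        rw [dist_comm, dist_eq_norm]
        gcongr
        exact hexNorm_le _
    _ = 4 * √3 * dist u v := by
        field_simp
        rw [Real.sq_sqrt (by norm_num)]
        ring

/-- For a finite set `S` of points in the plane in convex position and in
general position, `ΘΘ₆(S)` is an 8-spanner. -/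
theorem thetaTheta6_convex_eight_spanner (S : Finset ℂ) (hconv : ConvexPos S)
    (hgen : GenPos S) :
    ∀ u ∈ S, ∀ v ∈ S,
      ∃ p : List ℂ, IsPath (TTAdj S) u v p ∧ pathLength p ≤ 8 * dist u v := by
  have hconst : 4 * √3 ≤ 8 := by
    nlinarith [Real.sq_sqrt (show (0 : ℝ) ≤ 3 by norm_num)]
  exact fun u hu v hv ↦ (thetaTheta6_convex_eight_spanner_general S hconv hgen u hu v hv).imp
    fun _ h ↦ ⟨h.1, h.2.trans (by gcongr)⟩

end
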